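/- arXiv:2602.03642 — 3 statements merged into one kernel-verified Lean document; each statement's English description precedes it below -/
import Mathlib

section
/- Let I be a nonzero ideal of ℤ[r] with gcd(N(I), Disc(f)) = 1 such that n − r ∈ I for some integer n. If P₁ and P₂ are prime ideals of ℤ[r] both containing I and with N(P₁) = N(P₂), then P₁ = P₂; that is, I cannot be divisible by two distinct prime ideals of the same norm. -/
open Polynomial

/-- The subring `ℤ[r]` of `K` generated by `r`. -/
noncomputable def Zr {K : Type*} [Field K] (r : K) : Subalgebra ℤ K := Algebra.adjoin ℤ {r}

/-- `r` as an element of `ℤ[r]`. -/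
noncomputable def rZ {K : Type*} [Field K] (r : K) : Zr r := ⟨r, Algebra.subset_adjoin rfl⟩

/-- The norm `N(I)` of an ideal `I` of `ℤ[r]`, i.e. the cardinality of `ℤ[r]/I`. -/
noncomputable def Nrm {K : Type*} [Field K] (r : K) (I : Ideal (Zr r)) : ℕ :=
  Nat.card ((Zr r) ⧸ I)

/-- The discriminant of the cubic `X³ + c₂X² + c₁X + c₀`. -/
def discF (c₀ c₁ c₂ : ℤ) : ℤ :=
  18 * c₂ * c₁ * c₀ - 4 * c₂ ^ 3 * c₀ + c₂ ^ 2 * c₁ ^ 2 - 4 * c₁ ^ 3 - 27 * c₀ ^ 2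

/-!
Since `r ≡ n` modulo `I`, every element of `ℤ[r]` is congruent modulo `I` to an integer. Hence an
ideal `J ⊇ I` is generated by `I` and the integers it contains. As `ℤ / (J ∩ ℤ) ≅ ℤ[r] / J`, these
integers are the multiples of `N(J)`, so `J = I + (N(J))` is determined by `I` and `N(J)`.
-/

theorem surjective_algebraMap_quotient_of_adjoin_eq_top {A R : Type*} [CommSemiring A] [CommRing R]
    [Algebra A R] {s : Set R} (hs : Algebra.adjoin A s = ⊤) {I : Ideal R}
    (h : ∀ x ∈ s, ∃ a : A, algebraMap A R a - x ∈ I) :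
    Function.Surjective (algebraMap A (R ⧸ I)) := by
  have hadjoin : Algebra.adjoin A s ≤
      (Algebra.ofId A (R ⧸ I)).range.comap (Ideal.Quotient.mkₐ A I) := by
    refine Algebra.adjoin_le fun x hx ↦ ?_
    obtain ⟨a, ha⟩ := h x hx
    exact ⟨a, Ideal.Quotient.eq.mpr ha⟩
  intro y
  obtain ⟨x, rfl⟩ := Ideal.Quotient.mk_surjective y
  exact hadjoin (hs ▸ Algebra.mem_top : x ∈ Algebra.adjoin A s)

section IntegerResidues

variable {R : Type*} [CommRing R] {I J : Ideal R}

-- If `R ⧸ J` is infinite, then `Nat.card (R ⧸ J) = 0` and `J` contains no nonzero integer.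
theorem comap_algebraMap_int_eq_span_natCard_quotient
    (hJ : Function.Surjective (algebraMap ℤ (R ⧸ J))) :
    J.comap (algebraMap ℤ R) = Ideal.span {(Nat.card (R ⧸ J) : ℤ)} := by
  have hker : RingHom.ker (algebraMap ℤ (R ⧸ J)) = J.comap (algebraMap ℤ R) := by
    ext a
    exact Ideal.Quotient.eq_zero_iff_mem
  have hcard : Ideal.absNorm (J.comap (algebraMap ℤ R)) = Nat.card (R ⧸ J) := by
    rw [← hker]
    exact Nat.card_congr (RingHom.quotientKerEquivOfSurjective hJ).toEquiv
  rw [← hcard, Int.ideal_span_absNorm_eq_self]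

theorem eq_sup_span_natCard_quotient (hI : Function.Surjective (algebraMap ℤ (R ⧸ I)))
    (hIJ : I ≤ J) : J = I ⊔ Ideal.span {(Nat.card (R ⧸ J) : R)} := by
  have hJ : Function.Surjective (algebraMap ℤ (R ⧸ J)) := by
    have hfactor : (Ideal.Quotient.factor hIJ).comp (algebraMap ℤ (R ⧸ I)) =
        algebraMap ℤ (R ⧸ J) := RingHom.ext_int _ _
    rw [← hfactor]
    exact (Ideal.Quotient.factor_surjective hIJ).comp hI
  have hspan : Ideal.span {(Nat.card (R ⧸ J) : R)} =
      (J.comap (algebraMap ℤ R)).map (algebraMap ℤ R) := by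
    rw [comap_algebraMap_int_eq_span_natCard_quotient hJ, Ideal.map_span,
      Set.image_singleton, map_natCast]
  rw [hspan]
  refine le_antisymm (fun x hx ↦ ?_) (sup_le hIJ Ideal.map_comap_le)
  obtain ⟨a, ha⟩ := hI (Ideal.Quotient.mk I x)
  have hax : algebraMap ℤ R a - x ∈ I := Ideal.Quotient.eq.mp ha
  have haJ : algebraMap ℤ R a ∈ J := (Submodule.sub_mem_iff_left J hx).mp (hIJ hax)
  rw [← sub_sub_cancel (algebraMap ℤ R a) x]
  exact sub_mem (Ideal.mem_sup_right (Ideal.mem_map_of_mem _ haJ)) (Ideal.mem_sup_left hax)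

end IntegerResidues

theorem adjoin_rZ_eq_top {K : Type*} [Field K] (r : K) : Algebra.adjoin ℤ {rZ r} = ⊤ := by
  have hpreimage : ((↑) : Zr r → K) ⁻¹' {r} = {rZ r} := by
    ext x
    exact (Subtype.ext_iff (a2 := rZ r)).symm
  rw [← hpreimage]
  exact Algebra.adjoin_adjoin_coe_preimage

theorem stmt_3_general {R : Type*} [CommRing R] {r : R} (hr : Algebra.adjoin ℤ {r} = ⊤)
    {I J₁ J₂ : Ideal R} {n : ℤ} (hn : (n : R) - r ∈ I) (hIJ₁ : I ≤ J₁) (hIJ₂ : I ≤ J₂)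
    (hcard : Nat.card (R ⧸ J₁) = Nat.card (R ⧸ J₂)) : J₁ = J₂ := by
  have hI : Function.Surjective (algebraMap ℤ (R ⧸ I)) :=
    surjective_algebraMap_quotient_of_adjoin_eq_top hr <| by rintro _ rfl; exact ⟨n, hn⟩
  calc
    J₁ = I ⊔ Ideal.span {(Nat.card (R ⧸ J₁) : R)} := eq_sup_span_natCard_quotient hI hIJ₁
    _ = I ⊔ Ideal.span {(Nat.card (R ⧸ J₂) : R)} := by rw [hcard]
    _ = J₂ := (eq_sup_span_natCard_quotient hI hIJ₂).symm

/-- Let `I` be a nonzero ideal of `ℤ[r]` with `gcd(N(I), Disc(f)) = 1` such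
that `n − r ∈ I` for some integer `n`. If `P₁, P₂` are prime ideals of `ℤ[r]` both containing
`I` with `N(P₁) = N(P₂)`, then `P₁ = P₂`. -/
theorem stmt_3 (c₀ c₁ c₂ : ℤ)
    (hf : Irreducible (X ^ 3 + C c₂ * X ^ 2 + C c₁ * X + C c₀ : ℤ[X]))
    (K : Type*) [Field K] [NumberField K] (r : K)
    (hr : aeval r (X ^ 3 + C c₂ * X ^ 2 + C c₁ * X + C c₀ : ℤ[X]) = 0)
    (hgen : Algebra.adjoin ℚ {r} = ⊤)
    (I : Ideal (Zr r)) (hI0 : I ≠ ⊥)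
    (hgcd : Int.gcd (Nrm r I : ℤ) (discF c₀ c₁ c₂) = 1)
    (hn : ∃ n : ℤ, (n : Zr r) - rZ r ∈ I)
    (P₁ P₂ : Ideal (Zr r)) (hP₁ : P₁.IsPrime) (hP₂ : P₂.IsPrime)
    (hIP₁ : I ≤ P₁) (hIP₂ : I ≤ P₂) (hNN : Nrm r P₁ = Nrm r P₂) :
    P₁ = P₂ := by
  obtain ⟨n, hn⟩ := hn
  exact stmt_3_general (adjoin_rZ_eq_top r) hn hIP₁ hIP₂ hNN
end

section
/- Let I be a nonzero ideal of ℤ[r] with gcd(N(I), Disc(f)) = 1 such that n − r ∈ I for some integer n. Then ρ(I) = 1; that is, there is exactly one residue class k modulo N(I) such that for every integer n one has n − r ∈ I if and only if n ≡ k (mod N(I)). -/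
open Polynomial

/-- `ρ(I) = #{n mod N(I) : I ∣ n − r}`. -/
noncomputable def rho {K : Type*} [Field K] (r : K) (I : Ideal (Zr r)) : ℕ :=
  Nat.card {k : ZMod (Nrm r I) // ∃ n : ℤ, (n : ZMod (Nrm r I)) = k ∧ (n : Zr r) - rZ r ∈ I}

/-!
If `n - r ∈ I` then `r` is congruent to an integer modulo `I`, and since `r` generates `ℤ[r]` every
element is. So `ℤ[r]/I` is a quotient of `ℤ` with `N(I)` elements, hence of characteristic `N(I)`,
and two integers congruent to `r` modulo `I` differ by a multiple of `N(I)`. When `ℤ[r]/I` is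
infinite, `Nrm r I = 0`, which is again its characteristic, and `ZMod 0 = ℤ`.
-/

theorem charP_natCard_of_intCast_surjective {R : Type*} [NonAssocRing R]
    (h : Function.Surjective (Int.cast : ℤ → R)) : CharP R (Nat.card R) := by
  have one_generates : ∀ x : R, x ∈ AddSubgroup.zmultiples (1 : R) :=
    h.forall.2 fun n ↦ ⟨n, zsmul_one n⟩
  rw [← addOrderOf_eq_card_of_forall_mem_zmultiples one_generates]
  exact CharP.addOrderOf_one R

theorem algebraMap_quotient_surjective_of_sub_mem {R A : Type*} [CommSemiring R] [CommRing A]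
    [Algebra R A] {x : A} (hx : Algebra.adjoin R {x} = ⊤) {I : Ideal A} {a : R}
    (ha : algebraMap R A a - x ∈ I) : Function.Surjective (algebraMap R (A ⧸ I)) := by
  have mk_x : Ideal.Quotient.mkₐ R I x = algebraMap R (A ⧸ I) a := (Ideal.Quotient.eq.2 ha).symm
  rw [Algebra.surjective_algebraMap_iff]
  calc
    (⊤ : Subalgebra R (A ⧸ I)) = (Ideal.Quotient.mkₐ R I).range :=
      (AlgHom.range_eq_top _).2 (Ideal.Quotient.mkₐ_surjective R I) |>.symm
    _ = (Algebra.adjoin R {x}).map (Ideal.Quotient.mkₐ R I) := by rw [hx, Algebra.map_top]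
    _ = Algebra.adjoin R {algebraMap R (A ⧸ I) a} := by
      rw [AlgHom.map_adjoin_singleton, mk_x]
    _ = ⊥ := Algebra.adjoin_singleton_algebraMap _ a

theorem intCast_sub_mem_iff_of_adjoin_eq_top {A : Type*} [CommRing A] {x : A}
    (hx : Algebra.adjoin ℤ {x} = ⊤) {I : Ideal A} {m : ℤ} (hm : (m : A) - x ∈ I) (n : ℤ) :
    (n : A) - x ∈ I ↔ (n : ZMod (Nat.card (A ⧸ I))) = m := by
  have : CharP (A ⧸ I) (Nat.card (A ⧸ I)) :=
    charP_natCard_of_intCast_surjective (algebraMap_quotient_surjective_of_sub_mem hx hm)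
  have mk_x : Ideal.Quotient.mk I x = (m : A ⧸ I) := (Ideal.Quotient.eq.2 hm).symm
  rw [← Ideal.Quotient.eq, mk_x, map_intCast, CharP.intCast_eq_intCast _ (Nat.card (A ⧸ I)),
    ZMod.intCast_eq_intCast_iff]

theorem rho_eq_one_of_forall_mem_iff {K : Type*} [Field K] {r : K} {I : Ideal (Zr r)} {m : ℤ}
    (h : ∀ n : ℤ, (n : Zr r) - rZ r ∈ I ↔ (n : ZMod (Nrm r I)) = m) : rho r I = 1 := by
  have class_iff (k : ZMod (Nrm r I)) :
      (∃ n : ℤ, (n : ZMod (Nrm r I)) = k ∧ (n : Zr r) - rZ r ∈ I) ↔ k = m :=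
    ⟨fun ⟨n, hnk, hn⟩ ↦ hnk ▸ (h n).1 hn, fun hk ↦ ⟨m, hk.symm, (h m).2 rfl⟩⟩
  simp only [rho, class_iff, Nat.card_unique]

theorem stmt_4_general {K : Type*} [Field K] (r : K) (I : Ideal (Zr r))
    (hn : ∃ n : ℤ, (n : Zr r) - rZ r ∈ I) :
    rho r I = 1 ∧
      ∃! k : ZMod (Nrm r I), ∀ n : ℤ,
        ((n : Zr r) - rZ r ∈ I ↔ (n : ZMod (Nrm r I)) = k) := by
  obtain ⟨m, hm⟩ := hn
  have mem_iff : ∀ n : ℤ, (n : Zr r) - rZ r ∈ I ↔ (n : ZMod (Nrm r I)) = m :=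
    intCast_sub_mem_iff_of_adjoin_eq_top (adjoin_rZ_eq_top r) hm
  exact ⟨rho_eq_one_of_forall_mem_iff mem_iff, m, mem_iff, fun k hk ↦ ((hk m).1 hm).symm⟩

/-- Let `I` be a nonzero ideal of `ℤ[r]` with `gcd(N(I), Disc(f)) = 1` such
that `n − r ∈ I` for some integer `n`. Then `ρ(I) = 1`; that is, there is exactly one residue
class `k` modulo `N(I)` such that for every integer `n` one has `n − r ∈ I` iff
`n ≡ k (mod N(I))`. -/
theorem stmt_4 (c₀ c₁ c₂ : ℤ)
    (hf : Irreducible (X ^ 3 + C c₂ * X ^ 2 + C c₁ * X + C c₀ : ℤ[X]))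
    (K : Type*) [Field K] [NumberField K] (r : K)
    (hr : aeval r (X ^ 3 + C c₂ * X ^ 2 + C c₁ * X + C c₀ : ℤ[X]) = 0)
    (hgen : Algebra.adjoin ℚ {r} = ⊤)
    (I : Ideal (Zr r)) (hI0 : I ≠ ⊥)
    (hgcd : Int.gcd (Nrm r I : ℤ) (discF c₀ c₁ c₂) = 1)
    (hn : ∃ n : ℤ, (n : Zr r) - rZ r ∈ I) :
    rho r I = 1 ∧
      ∃! k : ZMod (Nrm r I), ∀ n : ℤ,
        ((n : Zr r) - rZ r ∈ I ↔ (n : ZMod (Nrm r I)) = k) :=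
  stmt_4_general r I hn
end

section
/- Let α, δ > 0 and suppose that for every sufficiently large X there is a set A₁(X) ⊆ {n ∈ ℤ : X < n < 2X} such that #A₁(X)/X → α as X → ∞ and L₁(n, X) > (1 + δ)·log X for all n ∈ A₁(X). Then for every ε > 0 and all sufficiently large X, the number of integers n with X < n < 2X for which f(n) has a prime factor p ≥ X^{1 + αδ/2 − ε} is at least (α²δ − ε)·X. -/
open Polynomial NumberField

open Classical in
/-- `L₁(n, X) = ∑_{P prime ideal of O_K, N(P) ≤ 3X} v_P((n − r))·log N(P)`, where
`v_P` is the exponent of `P` in the prime ideal factorization of the ideal `(n − r)`. -/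
noncomputable def L1 {K : Type*} [Field K] [NumberField K] (rO : 𝓞 K) (n : ℤ) (Xr : ℝ) : ℝ :=
  ∑ᶠ P : Ideal (𝓞 K),
    if P.IsPrime ∧ (Nat.card ((𝓞 K) ⧸ P) : ℝ) ≤ 3 * Xr then
      (Multiset.count P
          (UniqueFactorizationMonoid.normalizedFactors
            (Ideal.span {(n : 𝓞 K) - rO})) : ℝ) * Real.log (Nat.card ((𝓞 K) ⧸ P))
    else 0

/-!
Average `L₁(n, Y)` over the integers `n ∈ (Y, 2Y)`. A prime ideal `P` not containing `f'(θ)` can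
divide some `n - θ` only if `N(P)` is a prime number, and then each power `P ^ k` divides `n - θ` on
a single residue class modulo `N(P) ^ k`. By Mertens' estimate
`∑_{N(P) ≤ x} log N(P) / N(P) ≤ (1 + o(1)) log x`, which comes from the asymptotic count of ideals,
the average of `L₁` is at most `(1 + o(1)) log Y`. The excess of `L₁` on `A₁` must therefore be
compensated: at least `(α²δ - o(1)) Y` of the `n` satisfy `L₁(n, Y) ≤ (1 - αδ) log Y`.

For such an `n` the ideal `(n - θ)` has norm `|f(n)|` of size `Y ^ d`, where `d = deg f`, so at most
`d - 1` of its prime factors have norm greater than `3Y`. Their norms have total logarithm at least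
`(d - 1 + αδ) log Y - O(1)`, hence one of them is at least `Y ^ (1 + αδ / (d - 1) - ε)`; it is a
prime number dividing `f(n)`.
-/

open Filter Topology UniqueFactorizationMonoid
open Ideal (absNorm)

section Counting

lemma card_le_div_add_one_of_spaced {T : Finset ℤ} {a b s : ℝ} (hs : 0 < s) (hab : a ≤ b)
    (hT : ∀ n ∈ T, a ≤ (n : ℝ) ∧ (n : ℝ) ≤ b)
    (hsep : (T : Set ℤ).Pairwise fun n m => s ≤ |(n : ℝ) - m|) :
    (T.card : ℝ) ≤ (b - a) / s + 1 := by
  have hmaps : Set.MapsTo (fun n : ℤ => ⌊((n : ℝ) - a) / s⌋₊) T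
      (Finset.range (⌊(b - a) / s⌋₊ + 1)) := fun n hn => by
    have hnb := (hT n hn).2
    simp only [Finset.coe_range, Set.mem_Iio, Nat.lt_succ_iff]
    gcongr
  have hinj : Set.InjOn (fun n : ℤ => ⌊((n : ℝ) - a) / s⌋₊) T := by
    intro n hn m hm hfloor
    by_contra hne
    have hnonneg : ∀ k ∈ T, 0 ≤ ((k : ℝ) - a) / s := fun k hk =>
      div_nonneg (sub_nonneg.2 (hT k hk).1) hs.le
    have hclose : |((n : ℝ) - a) / s - ((m : ℝ) - a) / s| < 1 := by
      apply Int.abs_sub_lt_one_of_floor_eq_floor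
      rw [← Int.natCast_floor_eq_floor (hnonneg n hn), ← Int.natCast_floor_eq_floor (hnonneg m hm)]
      exact congrArg _ hfloor
    rw [← sub_div, sub_sub_sub_cancel_right, abs_div, abs_of_pos hs, div_lt_one hs] at hclose
    exact hclose.not_ge (hsep hn hm hne)
  calc (T.card : ℝ) ≤ (Finset.range (⌊(b - a) / s⌋₊ + 1)).card :=
        Nat.cast_le.2 (Finset.card_le_card_of_injOn _ hmaps hinj)
    _ = ⌊(b - a) / s⌋₊ + 1 := by simp
    _ ≤ (b - a) / s + 1 := by
        gcongr
        exact Nat.floor_le (div_nonneg (sub_nonneg.2 hab) hs.le)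

lemma sum_eq_sum_card_filter_le {ι : Type*} (S : Finset ι) {c : ι → ℕ} {M : ℕ}
    (hM : ∀ i ∈ S, c i ≤ M) :
    ∑ i ∈ S, c i = ∑ k ∈ Finset.Ico 1 (M + 1), (S.filter (k ≤ c ·)).card := by
  have hc : ∀ i ∈ S, c i = ∑ k ∈ Finset.Ico 1 (M + 1), if k ≤ c i then 1 else 0 := by
    intro i hi
    have hfilter : (Finset.Ico 1 (M + 1)).filter (· ≤ c i) = Finset.Icc 1 (c i) := by
      ext k
      have := hM i hi
      simp only [Finset.mem_filter, Finset.mem_Ico, Finset.mem_Icc]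
      lia
    rw [← Finset.card_filter, hfilter, Nat.card_Icc, Nat.add_sub_cancel]
  rw [Finset.sum_congr rfl hc, Finset.sum_comm]
  simp only [Finset.card_filter]

lemma sum_le_div_sub_one_add {ι : Type*} (S : Finset ι) {c : ι → ℕ} {M : ℕ} {N Y : ℝ}
    (hN : 1 < N) (hY : 0 ≤ Y) (hM : ∀ i ∈ S, c i ≤ M)
    (hcard : ∀ k, ((S.filter (k ≤ c ·)).card : ℝ) ≤ Y / N ^ k + 1) :
    ∑ i ∈ S, (c i : ℝ) ≤ Y / (N - 1) + M := by
  have hgeom : ∑ k ∈ Finset.Ico 1 (M + 1), (N⁻¹) ^ k ≤ 1 / (N - 1) := by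
    have h := geom_sum_Ico_le_of_lt_one (x := N⁻¹) (by positivity) (inv_lt_one_of_one_lt₀ hN)
      (m := 1) (n := M + 1)
    have hN' : N - 1 ≠ 0 := by linarith
    refine h.trans_eq ?_
    rw [pow_one, show 1 - N⁻¹ = (N - 1) / N by field_simp]
    field_simp
  calc ∑ i ∈ S, (c i : ℝ)
      = ∑ k ∈ Finset.Ico 1 (M + 1), ((S.filter (k ≤ c ·)).card : ℝ) := by
        exact_mod_cast sum_eq_sum_card_filter_le S hM
    _ ≤ ∑ k ∈ Finset.Ico 1 (M + 1), (Y * (N⁻¹) ^ k + 1) := by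
        refine Finset.sum_le_sum fun k _ => (hcard k).trans_eq ?_
        rw [inv_pow, div_eq_mul_inv]
    _ = Y * ∑ k ∈ Finset.Ico 1 (M + 1), (N⁻¹) ^ k + M := by
        rw [Finset.sum_add_distrib, Finset.mul_sum]
        simp
    _ ≤ Y * (1 / (N - 1)) + M := by gcongr
    _ = Y / (N - 1) + M := by ring

lemma card_mul_add_card_sub_mul_le_sum {ι : Type*} (S : Finset ι) {f : ι → ℝ} {l u : ℝ}
    (hf : ∀ i ∈ S, 0 ≤ f i) (hlu : l ≤ u) :
    ((S.filter (u < f ·)).card : ℝ) * u +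
        (S.card - (S.filter (u < f ·)).card - (S.filter (f · ≤ l)).card) * l ≤ ∑ i ∈ S, f i := by
  have hcard : ∀ p : ι → Prop, [DecidablePred p] →
      ((S.filter p).card : ℝ) = ∑ i ∈ S, if p i then 1 else 0 := fun p _ => by
    simp
  calc _ = ∑ i ∈ S, ((if u < f i then 1 else 0) * u +
        (1 - (if u < f i then 1 else 0) - (if f i ≤ l then 1 else 0)) * l) := by
        rw [hcard, hcard, Finset.sum_add_distrib, ← Finset.sum_mul, ← Finset.sum_mul,
          Finset.sum_sub_distrib, Finset.sum_sub_distrib]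
        simp
    _ ≤ ∑ i ∈ S, f i := Finset.sum_le_sum fun i hi => by
        have := hf i hi
        split_ifs <;> linarith

lemma exists_le_mem_of_mul_lt_sum {s : Multiset ℝ} {k m : ℝ} (hcard : (s.card : ℝ) ≤ k)
    (hpos : 0 < s.sum) (hsum : k * m < s.sum) : ∃ x ∈ s, m ≤ x := by
  by_contra! hlt
  have hle : s.sum ≤ s.card • max m 0 :=
    Multiset.sum_le_card_nsmul s _ fun x hx => (hlt x hx).le.trans (le_max_left _ _)
  have hle' : s.sum ≤ k * max m 0 :=
    (hle.trans_eq (nsmul_eq_mul _ _)).trans (mul_le_mul_of_nonneg_right hcard (le_max_right _ _))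
  rcases max_cases m 0 with ⟨h, -⟩ | ⟨h, -⟩ <;> rw [h] at hle' <;> linarith

/-- The integers `n` with `Y < n < 2Y`. -/
noncomputable def dyadicInts (Y : ℝ) : Finset ℤ := Finset.Ioo ⌊Y⌋ ⌈2 * Y⌉

lemma mem_dyadicInts {Y : ℝ} {n : ℤ} : n ∈ dyadicInts Y ↔ Y < n ∧ (n : ℝ) < 2 * Y := by
  rw [dyadicInts, Finset.mem_Ioo, Int.floor_lt, Int.lt_ceil]

lemma abs_card_dyadicInts_sub_le {Y : ℝ} (hY : 0 < Y) : |((dyadicInts Y).card : ℝ) - Y| ≤ 1 := by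
  have hlt : ⌊Y⌋ < ⌈2 * Y⌉ := Int.lt_ceil.2 ((Int.floor_le Y).trans_lt (by linarith))
  have hcard : ((dyadicInts Y).card : ℝ) = ⌈2 * Y⌉ - ⌊Y⌋ - 1 := by
    have : ((dyadicInts Y).card : ℤ) = ⌈2 * Y⌉ - ⌊Y⌋ - 1 := Int.card_Ioo_of_lt _ _ hlt
    exact_mod_cast this
  rw [hcard, abs_le]
  constructor <;> linarith [Int.le_ceil (2 * Y), Int.ceil_lt_add_one (2 * Y), Int.floor_le Y,
    Int.sub_one_lt_floor Y]

end Counting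

section Mertens

variable {K : Type*} [Field K] [NumberField K]

lemma two_le_absNorm {P : Ideal (𝓞 K)} (hP : P.IsPrime) (hP0 : P ≠ ⊥) : 2 ≤ absNorm P := by
  have hne_zero : absNorm P ≠ 0 := Ideal.absNorm_eq_zero_iff.not.2 hP0
  have hne_one : absNorm P ≠ 1 := Ideal.absNorm_eq_one_iff.not.2 hP.ne_top
  lia

lemma log_absNorm_le_of_dvd {I J : Ideal (𝓞 K)} (hJ : J ≠ ⊥) (h : I ∣ J) :
    Real.log (absNorm I) ≤ Real.log (absNorm J) := by
  have hJ' : absNorm J ≠ 0 := Ideal.absNorm_eq_zero_iff.not.2 hJ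
  have hdvd : absNorm I ∣ absNorm J := map_dvd absNorm h
  have hI' : absNorm I ≠ 0 := ne_zero_of_dvd_ne_zero hJ' hdvd
  exact Real.log_le_log (by positivity) (by exact_mod_cast Nat.le_of_dvd (by positivity) hdvd)

lemma sum_log_absNorm_le_of_forall_dvd {I : Ideal (𝓞 K)} (hI : I ≠ ⊥) {F : Finset (Ideal (𝓞 K))}
    (hF : ∀ P ∈ F, P.IsPrime ∧ P ∣ I) :
    ∑ P ∈ F, Real.log (absNorm P) ≤ Real.log (absNorm I) := by
  have hne_bot : ∀ P ∈ F, P ≠ ⊥ := fun P hP => ne_zero_of_dvd_ne_zero hI (hF P hP).2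
  have hdvd : ∏ P ∈ F, P ∣ I := Finset.prod_primes_dvd I
    (fun P hP => Ideal.prime_of_isPrime (hne_bot P hP) (hF P hP).1) fun P hP => (hF P hP).2
  have hlog : ∑ P ∈ F, Real.log (absNorm P) = Real.log (absNorm (∏ P ∈ F, P)) := by
    rw [map_prod, Nat.cast_prod, Real.log_prod fun P hP => by
      simpa [Ideal.absNorm_eq_zero_iff] using hne_bot P hP]
  exact hlog.trans_le (log_absNorm_le_of_dvd hI hdvd)

lemma finite_setOf_absNorm_le (x : ℝ) :
    {I : Ideal (𝓞 K) | I ≠ ⊥ ∧ (absNorm I : ℝ) ≤ x}.Finite :=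
  (Ideal.finite_setOfPred_absNorm_le ⌊x⌋₊).subset fun _ hI => Nat.le_floor hI.2

variable (K) in
/-- The nonzero ideals of `𝓞 K` of norm at most `x`. -/
noncomputable def idealsNormLE (x : ℝ) : Finset (Ideal (𝓞 K)) :=
  (finite_setOf_absNorm_le x).toFinset

open Classical in
variable (K) in
/-- The nonzero prime ideals of `𝓞 K` of norm at most `x`. -/
noncomputable def primesNormLE (x : ℝ) : Finset (Ideal (𝓞 K)) :=
  (idealsNormLE K x).filter (·.IsPrime)

lemma mem_idealsNormLE {x : ℝ} {I : Ideal (𝓞 K)} :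
    I ∈ idealsNormLE K x ↔ I ≠ ⊥ ∧ (absNorm I : ℝ) ≤ x := by
  simp [idealsNormLE]

lemma mem_primesNormLE {x : ℝ} {P : Ideal (𝓞 K)} :
    P ∈ primesNormLE K x ↔ P.IsPrime ∧ P ≠ ⊥ ∧ (absNorm P : ℝ) ≤ x := by
  simp [primesNormLE, mem_idealsNormLE, and_comm]

lemma primesNormLE_mono {x y : ℝ} (hxy : x ≤ y) : primesNormLE K x ⊆ primesNormLE K y :=
  fun _ hP =>
    let ⟨hprime, hne_bot, hle⟩ := mem_primesNormLE.1 hP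
    mem_primesNormLE.2 ⟨hprime, hne_bot, hle.trans hxy⟩

variable (K) in
lemma tendsto_card_idealsNormLE_div :
    Tendsto (fun x : ℝ => ((idealsNormLE K x).card : ℝ) / x) atTop
      (𝓝 (dedekindZeta_residue K)) := by
  rw [dedekindZeta_residue_def]
  refine (NumberField.Ideal.tendsto_norm_le_div_atTop₀ K).congr fun x => ?_
  congr 2
  rw [← Nat.card_eq_finsetCard]
  exact Nat.card_congr
    { toFun := fun I => ⟨I.1.1, mem_idealsNormLE.2 ⟨nonZeroDivisors.coe_ne_zero I.1, I.2⟩⟩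
      invFun := fun I => ⟨⟨I.1, mem_nonZeroDivisors_of_ne_zero (mem_idealsNormLE.1 I.2).1⟩,
        (mem_idealsNormLE.1 I.2).2⟩
      left_inv := fun _ => rfl
      right_inv := fun _ => rfl }

open Classical in
lemma card_idealsNormLE_div_le {J : Ideal (𝓞 K)} (hJ : J ≠ ⊥) (x : ℝ) :
    (idealsNormLE K (x / absNorm J)).card ≤ ((idealsNormLE K x).filter (J ∣ ·)).card := by
  refine Finset.card_le_card_of_injOn (J * ·) (fun I hI => ?_)
    fun _ _ _ _ h => mul_left_cancel₀ hJ h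
  obtain ⟨hI0, hIx⟩ := mem_idealsNormLE.1 hI
  have hpos : (0 : ℝ) < absNorm J := by
    exact_mod_cast Nat.pos_of_ne_zero (Ideal.absNorm_eq_zero_iff.not.2 hJ)
  refine Finset.mem_filter.2 ⟨mem_idealsNormLE.2 ⟨mul_ne_zero hJ hI0, ?_⟩, dvd_mul_right _ _⟩
  rw [map_mul, Nat.cast_mul]
  exact (le_div_iff₀' hpos).1 hIx

/- Double counting of the pairs `P ∣ I`, as in Chebyshev's treatment of `log n!`. -/
lemma sum_log_absNorm_mul_card_le (x : ℝ) :
    ∑ P ∈ primesNormLE K x, Real.log (absNorm P) * (idealsNormLE K (x / absNorm P)).card ≤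
      (idealsNormLE K x).card * Real.log x := by
  classical
  calc ∑ P ∈ primesNormLE K x, Real.log (absNorm P) * (idealsNormLE K (x / absNorm P)).card
      ≤ ∑ P ∈ primesNormLE K x, ∑ _I ∈ (idealsNormLE K x).filter (P ∣ ·),
          Real.log (absNorm P) := by
        refine Finset.sum_le_sum fun P hP => ?_
        rw [Finset.sum_const, nsmul_eq_mul, mul_comm]
        exact mul_le_mul_of_nonneg_right
          (Nat.cast_le.2 (card_idealsNormLE_div_le (mem_primesNormLE.1 hP).2.1 x))
          (Real.log_natCast_nonneg _)
    _ = ∑ I ∈ idealsNormLE K x, ∑ P ∈ (primesNormLE K x).filter (· ∣ I),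
          Real.log (absNorm P) := by
        simp only [Finset.sum_filter]
        exact Finset.sum_comm
    _ ≤ ∑ _I ∈ idealsNormLE K x, Real.log x := by
        refine Finset.sum_le_sum fun I hI => ?_
        obtain ⟨hI0, hIx⟩ := mem_idealsNormLE.1 hI
        have hpos : 0 < absNorm I := Nat.pos_of_ne_zero (Ideal.absNorm_eq_zero_iff.not.2 hI0)
        refine (sum_log_absNorm_le_of_forall_dvd hI0 fun P hP => ?_).trans
          (Real.log_le_log (by exact_mod_cast hpos) hIx)
        obtain ⟨hP, hPI⟩ := Finset.mem_filter.1 hP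
        exact ⟨(mem_primesNormLE.1 hP).1, hPI⟩
    _ = (idealsNormLE K x).card * Real.log x := by rw [Finset.sum_const, nsmul_eq_mul]

/- Evaluating at `x * y` makes `x * y / absNorm P ≥ y` for every `P` of norm at most `x`. -/
lemma mul_sum_log_div_absNorm_le {a b x y : ℝ} (hx : 1 ≤ x) (hy : 1 ≤ y)
    (hlow : ∀ z ≥ y, a * z ≤ (idealsNormLE K z).card)
    (hup : ((idealsNormLE K (x * y)).card : ℝ) ≤ b * (x * y)) :
    a * ∑ P ∈ primesNormLE K x, Real.log (absNorm P) / absNorm P ≤ b * Real.log (x * y) := by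
  have hxy : 0 < x * y := by positivity
  refine le_of_mul_le_mul_right ?_ hxy
  calc (a * ∑ P ∈ primesNormLE K x, Real.log (absNorm P) / absNorm P) * (x * y)
      = ∑ P ∈ primesNormLE K x, Real.log (absNorm P) * (a * (x * y / absNorm P)) := by
        rw [Finset.mul_sum, Finset.sum_mul]
        exact Finset.sum_congr rfl fun P _ => by ring
    _ ≤ ∑ P ∈ primesNormLE K x,
          Real.log (absNorm P) * (idealsNormLE K (x * y / absNorm P)).card := by
        refine Finset.sum_le_sum fun P hP => ?_
        obtain ⟨hprime, hne_bot, hPx⟩ := mem_primesNormLE.1 hP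
        have hpos : (0 : ℝ) < absNorm P := by
          exact_mod_cast zero_lt_two.trans_le (two_le_absNorm hprime hne_bot)
        gcongr
        refine hlow _ ((le_div_iff₀ hpos).2 ?_)
        rw [mul_comm x]
        gcongr
    _ ≤ ∑ P ∈ primesNormLE K (x * y),
          Real.log (absNorm P) * (idealsNormLE K (x * y / absNorm P)).card :=
        Finset.sum_le_sum_of_subset_of_nonneg
          (primesNormLE_mono (le_mul_of_one_le_right (by positivity) hy))
          fun P _ _ => mul_nonneg (Real.log_natCast_nonneg _) (Nat.cast_nonneg _)
    _ ≤ (idealsNormLE K (x * y)).card * Real.log (x * y) := sum_log_absNorm_mul_card_le _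
    _ ≤ b * (x * y) * Real.log (x * y) := by
        gcongr
        exact Real.log_nonneg (one_le_mul_of_one_le_of_one_le hx hy)
    _ = b * Real.log (x * y) * (x * y) := by ring

lemma exists_pos_one_add_pow_three_le {ε : ℝ} (hε : 0 < ε) :
    ∃ η > 0, (1 + η) ^ 3 ≤ 1 + ε := by
  refine ⟨min 1 (ε / 7), by positivity, ?_⟩
  set η := min 1 (ε / 7)
  have hη : 0 < η := by positivity
  have hη1 : η ≤ 1 := min_le_left _ _
  have hηε : η ≤ ε / 7 := min_le_right _ _
  nlinarith [mul_nonneg hη.le (sub_nonneg.2 hη1), mul_nonneg (sq_nonneg η) (sub_nonneg.2 hη1)]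

lemma eventually_const_le_mul_log (c : ℝ) {ε : ℝ} (hε : 0 < ε) :
    ∀ᶠ x : ℝ in atTop, c ≤ ε * Real.log x :=
  (Real.tendsto_log_atTop.const_mul_atTop hε).eventually_ge_atTop c

lemma eventually_log_mul_const_le {c ε : ℝ} (hc : c ≠ 0) (hε : 0 < ε) :
    ∀ᶠ x : ℝ in atTop, Real.log (x * c) ≤ (1 + ε) * Real.log x := by
  filter_upwards [eventually_const_le_mul_log (Real.log c) hε, eventually_ne_atTop 0] with x hlog hx
  rw [Real.log_mul hx hc]
  linarith

variable (K) in
lemma eventually_sum_log_div_absNorm_le {ε : ℝ} (hε : 0 < ε) :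
    ∀ᶠ x : ℝ in atTop, ∑ P ∈ primesNormLE K x, Real.log (absNorm P) / absNorm P ≤
      (1 + ε) * Real.log x := by
  obtain ⟨η, hη, hηε⟩ := exists_pos_one_add_pow_three_le hε
  set κ := dedekindZeta_residue K
  have hκ : 0 < κ := dedekindZeta_residue_pos K
  have hη1 : 1 < 1 + η := by linarith
  have hlim := tendsto_card_idealsNormLE_div K
  obtain ⟨y, hy⟩ := eventually_atTop.1 (((hlim.eventually_const_lt (div_lt_self hκ hη1)).and
    (hlim.eventually_lt_const (lt_mul_of_one_lt_right hκ hη1))).and (eventually_ge_atTop 1))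
  have hy1 : 1 ≤ y := (hy y le_rfl).2
  filter_upwards [eventually_ge_atTop 1, eventually_log_mul_const_le (by positivity : y ≠ 0) hη]
    with x hx hlog
  have hlow : ∀ z ≥ y, κ / (1 + η) * z ≤ (idealsNormLE K z).card := fun z hz =>
    ((lt_div_iff₀ (by linarith)).1 (hy z hz).1.1).le
  have hup : ((idealsNormLE K (x * y)).card : ℝ) ≤ κ * (1 + η) * (x * y) :=
    ((div_lt_iff₀ (by positivity)).1 (hy _ (le_mul_of_one_le_left (by positivity) hx)).1.2).le
  have hsum := mul_sum_log_div_absNorm_le hx hy1 hlow hup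
  set S := ∑ P ∈ primesNormLE K x, Real.log (absNorm P) / absNorm P
  calc S = κ / (1 + η) * S * ((1 + η) / κ) := by field_simp
    _ ≤ κ * (1 + η) * ((1 + η) * Real.log x) * ((1 + η) / κ) :=
        mul_le_mul_of_nonneg_right (hsum.trans (mul_le_mul_of_nonneg_left hlog (by positivity)))
          (by positivity)
    _ = (1 + η) ^ 3 * Real.log x := by field_simp
    _ ≤ (1 + ε) * Real.log x := by
        gcongr
        exact Real.log_nonneg hx

end Mertens

section Generator

lemma ringChar_eq_card_of_surjective_intCast {R : Type*} [CommRing R]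
    (h : Function.Surjective (Int.castRingHom R)) : ringChar R = Nat.card R := by
  have hbij : Function.Bijective (ZMod.castHom dvd_rfl R : ZMod (ringChar R) →+* R) := by
    refine ⟨ZMod.castHom_injective R, fun y => ?_⟩
    obtain ⟨z, rfl⟩ := h y
    exact ⟨z, map_intCast _ z⟩
  rw [← Nat.card_congr (Equiv.ofBijective _ hbij), Nat.card_zmod]

lemma intCast_eval_sub_aeval_mem {R : Type*} [CommRing R] {I : Ideal R} {t : R} {n : ℤ}
    (hn : (n : R) - t ∈ I) (q : ℤ[X]) : ((q.eval n : ℤ) : R) - aeval t q ∈ I := by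
  refine I.mem_of_dvd ?_ hn
  have hdvd := sub_dvd_eval_sub (n : R) t (q.map (algebraMap ℤ R))
  rwa [eval_intCast_map, eq_intCast, eval_map_algebraMap] at hdvd

variable {K : Type*} [Field K] [NumberField K] {θ : 𝓞 K}

lemma absNorm_eq_card_quotient (I : Ideal (𝓞 K)) : absNorm I = Nat.card (𝓞 K ⧸ I) := by
  rw [Ideal.absNorm_apply, Submodule.cardQuot_apply]

lemma minpoly_rat_eq_map_minpoly_int (θ : 𝓞 K) :
    minpoly ℚ (θ : K) = (minpoly ℤ θ).map (algebraMap ℤ ℚ) :=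
  minpoly.isIntegrallyClosed_eq_field_fractions ℚ K (RingOfIntegers.isIntegral θ)

lemma natDegree_minpoly_eq_finrank (hθ : Algebra.adjoin ℚ {(θ : K)} = ⊤) :
    (minpoly ℤ θ).natDegree = Module.finrank ℚ K := by
  have hint : IsIntegral ℚ (θ : K) := Algebra.IsIntegral.isIntegral _
  rw [(PowerBasis.ofAdjoinEqTop hint hθ).finrank, PowerBasis.ofAdjoinEqTop_dim,
    minpoly_rat_eq_map_minpoly_int, (minpoly.monic (RingOfIntegers.isIntegral θ)).natDegree_map]

lemma norm_intCast_sub_eq_eval_minpoly (hθ : Algebra.adjoin ℚ {(θ : K)} = ⊤) (n : ℤ) :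
    Algebra.norm ℤ ((n : 𝓞 K) - θ) = (minpoly ℤ θ).eval n := by
  have hint : IsIntegral ℚ (θ : K) := Algebra.IsIntegral.isIntegral _
  let pb := PowerBasis.ofAdjoinEqTop hint hθ
  have hscalar : Matrix.scalar (Fin pb.dim) (n : ℚ) = Algebra.leftMulMatrix pb.basis (n : K) := by
    rw [map_intCast, map_intCast]
  have hnorm : Algebra.norm ℚ ((n : K) - θ) = (minpoly ℚ (θ : K)).eval (n : ℚ) := by
    rw [← PowerBasis.ofAdjoinEqTop_gen hint hθ, ← charpoly_leftMulMatrix pb, Matrix.eval_charpoly,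
      hscalar, ← map_sub, ← Algebra.norm_eq_matrix_det]
  have hsub : (((n : 𝓞 K) - θ : 𝓞 K) : K) = n - θ := by simp
  have hcoe : ((Algebra.norm ℤ ((n : 𝓞 K) - θ) : ℤ) : ℚ) = ((minpoly ℤ θ).eval n : ℤ) := by
    rw [Algebra.coe_norm_int, hsub, hnorm, minpoly_rat_eq_map_minpoly_int,
      eval_intCast_map, eq_intCast, Int.cast_id]
  exact_mod_cast hcoe

lemma absNorm_span_intCast_sub (hθ : Algebra.adjoin ℚ {(θ : K)} = ⊤) (n : ℤ) :
    absNorm (Ideal.span {(n : 𝓞 K) - θ}) = ((minpoly ℤ θ).eval n).natAbs := by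
  rw [Ideal.absNorm_span_singleton, norm_intCast_sub_eq_eval_minpoly hθ]

/-- The value `f'(θ)` for `f` the minimal polynomial of `θ`. It lies in the conductor of `ℤ[θ]`,
so `ℤ[θ]` and `𝓞 K` agree at the primes not dividing it. -/
noncomputable def minpolyDeriv (θ : 𝓞 K) : 𝓞 K := aeval θ (derivative (minpoly ℤ θ))

lemma minpolyDeriv_ne_zero (θ : 𝓞 K) : minpolyDeriv θ ≠ 0 := by
  intro h
  have hsep : (minpoly ℚ (θ : K)).Separable :=
    (minpoly.irreducible (Algebra.IsIntegral.isIntegral _)).separable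
  apply hsep.aeval_derivative_ne_zero (minpoly.aeval ℚ (θ : K))
  rw [minpoly_rat_eq_map_minpoly_int, derivative_map, aeval_map_algebraMap, aeval_algebraMap_apply]
  exact (congrArg _ h).trans (map_zero _)

lemma minpolyDeriv_mul_mem_adjoin (hθ : Algebra.adjoin ℚ {(θ : K)} = ⊤) (x : 𝓞 K) :
    minpolyDeriv θ * x ∈ Algebra.adjoin ℤ {θ} := by
  have hmem : minpolyDeriv θ ∈ conductor ℤ θ * differentIdeal ℤ (𝓞 K) := by
    rw [conductor_mul_differentIdeal ℤ ℚ K θ hθ]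
    exact Ideal.mem_span_singleton_self _
  exact mem_conductor_iff.1 (Ideal.mul_le_left hmem) x

/- For `v` an inverse of `f'(θ)` modulo `P ^ k`, `x ≡ f'(θ) * (v * x) = q(θ) ≡ q(n)` for some
integer polynomial `q`. -/
lemma surjective_intCast_quotient_pow (hθ : Algebra.adjoin ℚ {(θ : K)} = ⊤) {P : Ideal (𝓞 K)}
    (hP : P.IsMaximal) (hD : minpolyDeriv θ ∉ P) {k : ℕ} {n : ℤ} (hn : (n : 𝓞 K) - θ ∈ P ^ k) :
    Function.Surjective (Int.castRingHom (𝓞 K ⧸ P ^ k)) := by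
  obtain ⟨w, i, hi, hwi⟩ := hP.exists_inv hD
  have hcop : IsCoprime (Ideal.span {minpolyDeriv θ}) P := Ideal.isCoprime_iff_exists.2
    ⟨_, Ideal.mul_mem_left _ w (Ideal.mem_span_singleton_self _), i, hi, hwi⟩
  obtain ⟨u, hu, j, hj, huj⟩ := Ideal.isCoprime_iff_exists.1 (hcop.pow_right (n := k))
  obtain ⟨v, rfl⟩ := Ideal.mem_span_singleton'.1 hu
  intro y
  obtain ⟨x, rfl⟩ := Ideal.Quotient.mk_surjective y
  obtain ⟨q, hq⟩ := Algebra.adjoin_mem_exists_aeval ℤ θ (minpolyDeriv_mul_mem_adjoin hθ (v * x))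
  refine ⟨q.eval n, ?_⟩
  rw [eq_intCast, ← map_intCast (Ideal.Quotient.mk (P ^ k)), Ideal.Quotient.eq]
  have hsplit : ((q.eval n : ℤ) : 𝓞 K) - x = ((q.eval n : ℤ) : 𝓞 K) - aeval θ q - x * j := by
    rw [hq]
    linear_combination x * huj
  rw [hsplit]
  exact sub_mem (intCast_eval_sub_aeval_mem hn q) (Ideal.mul_mem_left _ x hj)

lemma prime_absNorm_of_sub_mem (hθ : Algebra.adjoin ℚ {(θ : K)} = ⊤) {P : Ideal (𝓞 K)}
    (hP : P.IsPrime) (hP0 : P ≠ ⊥) (hD : minpolyDeriv θ ∉ P) {n : ℤ} (hn : (n : 𝓞 K) - θ ∈ P) :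
    (absNorm P).Prime := by
  have hsurj := surjective_intCast_quotient_pow hθ (hP.isMaximal hP0) hD (k := 1) (by rwa [pow_one])
  rw [pow_one] at hsurj
  have hchar := ringChar_eq_card_of_surjective_intCast hsurj
  rw [← absNorm_eq_card_quotient] at hchar
  rw [← hchar]
  exact (CharP.char_is_prime_or_zero (𝓞 K ⧸ P) _).resolve_right
    (hchar.trans_ne (Ideal.absNorm_eq_zero_iff.not.2 hP0))

lemma absNorm_pow_dvd_sub (hθ : Algebra.adjoin ℚ {(θ : K)} = ⊤) {P : Ideal (𝓞 K)}
    (hP : P.IsMaximal) (hD : minpolyDeriv θ ∉ P) {k : ℕ} {n m : ℤ}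
    (hn : (n : 𝓞 K) - θ ∈ P ^ k) (hm : (m : 𝓞 K) - θ ∈ P ^ k) :
    (absNorm P : ℤ) ^ k ∣ n - m := by
  have hsurj := surjective_intCast_quotient_pow hθ hP hD hn
  rw [← Nat.cast_pow, ← map_pow, absNorm_eq_card_quotient,
    ← ringChar_eq_card_of_surjective_intCast hsurj,
    ← CharP.intCast_eq_zero_iff (𝓞 K ⧸ P ^ k)]
  have hmem : ((n - m : ℤ) : 𝓞 K) ∈ P ^ k := by
    simpa using sub_mem hn hm
  simpa using Ideal.Quotient.eq_zero_iff_mem.2 hmem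

lemma absNorm_pow_dvd_sub_pow_finrank {P : Ideal (𝓞 K)} {k : ℕ} {n m : ℤ}
    (hn : (n : 𝓞 K) - θ ∈ P ^ k) (hm : (m : 𝓞 K) - θ ∈ P ^ k) :
    (absNorm P : ℤ) ^ k ∣ (n - m) ^ Module.finrank ℚ K := by
  have hmem : algebraMap ℤ (𝓞 K) (n - m) ∈ P ^ k := by
    simpa using sub_mem hn hm
  have hdvd := Ideal.absNorm_dvd_norm_of_mem hmem
  rwa [map_pow, Nat.cast_pow, Algebra.norm_algebraMap, RingOfIntegers.rank] at hdvd

lemma minpolyDeriv_notMem_of_absNorm_lt {P : Ideal (𝓞 K)}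
    (hP : absNorm (Ideal.span {minpolyDeriv θ}) < absNorm P) : minpolyDeriv θ ∉ P := by
  intro hmem
  have hne_zero : absNorm (Ideal.span {minpolyDeriv θ}) ≠ 0 := by
    simpa [Ideal.absNorm_eq_zero_iff] using minpolyDeriv_ne_zero θ
  exact hP.not_ge (Nat.le_of_dvd (Nat.pos_of_ne_zero hne_zero) (Ideal.absNorm_dvd_absNorm_of_le
    ((Ideal.span_singleton_le_iff_mem P).2 hmem)))

lemma card_le_finrank_of_absNorm_eq {p : ℕ} (hp : p.Prime) {F : Finset (Ideal (𝓞 K))}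
    (hF : ∀ P ∈ F, P.IsPrime ∧ absNorm P = p) : F.card ≤ Module.finrank ℚ K := by
  have hne_bot : Ideal.span {(p : 𝓞 K)} ≠ ⊥ := by simp [hp.ne_zero]
  have hdvd : ∀ P ∈ F, P.IsPrime ∧ P ∣ Ideal.span {(p : 𝓞 K)} := fun P hP => by
    refine ⟨(hF P hP).1, Ideal.dvd_span_singleton.2 ?_⟩
    rw [← (hF P hP).2]
    exact Ideal.absNorm_mem P
  have hlog : (F.card : ℝ) * Real.log p ≤ Module.finrank ℚ K * Real.log p := by
    calc (F.card : ℝ) * Real.log p = ∑ P ∈ F, Real.log (absNorm P) := by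
          rw [Finset.sum_congr rfl fun P hP => by rw [(hF P hP).2], Finset.sum_const, nsmul_eq_mul]
      _ ≤ Real.log (absNorm (Ideal.span {(p : 𝓞 K)})) :=
          sum_log_absNorm_le_of_forall_dvd hne_bot hdvd
      _ = Module.finrank ℚ K * Real.log p := by
          rw [Ideal.absNorm_span_natCast, RingOfIntegers.rank, Nat.cast_pow, Real.log_pow]
  have hpos : 0 < Real.log p := Real.log_pos (by exact_mod_cast hp.one_lt)
  exact_mod_cast le_of_mul_le_mul_right hlog hpos

variable (K) in
lemma card_primesNormLE_filter_prime_le (x : ℝ) :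
    ((primesNormLE K x).filter (fun P => (absNorm P).Prime)).card ≤
      Module.finrank ℚ K * Nat.primeCounting ⌊x⌋₊ := by
  classical
  rw [← Nat.primesLE_card_eq_primeCounting]
  refine Finset.card_le_mul_card_image_of_maps_to (f := absNorm) (fun P hP => ?_) _ fun p hp => ?_
  · obtain ⟨hP, hprime⟩ := Finset.mem_filter.1 hP
    exact Nat.mem_primesLE.2 ⟨Nat.le_floor (mem_primesNormLE.1 hP).2.2, hprime⟩
  · refine card_le_finrank_of_absNorm_eq (Nat.mem_primesLE.1 hp).2 fun P hP => ?_
    obtain ⟨hP, hPp⟩ := Finset.mem_filter.1 hP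
    exact ⟨(mem_primesNormLE.1 (Finset.mem_filter.1 hP).1).1, hPp⟩

end Generator

section Exponents

lemma eventually_pow_div_two_le_eval_le {f : ℝ[X]} (hf : f.Monic) :
    ∀ᶠ x : ℝ in atTop, x ^ f.natDegree / 2 ≤ f.eval x ∧ f.eval x ≤ 3 / 2 * x ^ f.natDegree := by
  have hlim : Tendsto (fun x => f.eval x / x ^ f.natDegree) atTop (𝓝 1) := by
    simpa [hf.leadingCoeff] using f.div_tendsto_atTop_leadingCoeff_div_of_degree_eq
      (X ^ f.natDegree) (by rw [degree_X_pow, degree_eq_natDegree hf.ne_zero])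
  filter_upwards [hlim.eventually_const_lt (by norm_num : (1 / 2 : ℝ) < 1),
    hlim.eventually_lt_const (by norm_num : (1 : ℝ) < 3 / 2), eventually_gt_atTop 0]
    with x hlow hup hx
  rw [lt_div_iff₀ (by positivity)] at hlow
  rw [div_lt_iff₀ (by positivity)] at hup
  exact ⟨by linarith, hup.le⟩

variable {K : Type*} [Field K] [NumberField K] {θ : 𝓞 K}

lemma eventually_absNorm_span_intCast_sub_bounds (hθ : Algebra.adjoin ℚ {(θ : K)} = ⊤) :
    ∀ᶠ Y : ℝ in atTop, ∀ n ∈ dyadicInts Y,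
      Y ^ Module.finrank ℚ K / 2 ≤ absNorm (Ideal.span {(n : 𝓞 K) - θ}) ∧
      (absNorm (Ideal.span {(n : 𝓞 K) - θ}) : ℝ) ≤ (3 * Y) ^ Module.finrank ℚ K := by
  have hmonic : (minpoly ℤ θ).Monic := minpoly.monic (RingOfIntegers.isIntegral θ)
  have hdeg : ((minpoly ℤ θ).map (Int.castRingHom ℝ)).natDegree = Module.finrank ℚ K := by
    rw [hmonic.natDegree_map, natDegree_minpoly_eq_finrank hθ]
  have hd : Module.finrank ℚ K ≠ 0 := Module.finrank_pos.ne'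
  have hbounds := eventually_pow_div_two_le_eval_le (hmonic.map (Int.castRingHom ℝ))
  rw [hdeg] at hbounds
  filter_upwards [eventually_forall_ge_atTop.2 hbounds, eventually_gt_atTop 0]
    with Y hYbounds hY n hn
  obtain ⟨hYn, hn2Y⟩ := mem_dyadicInts.1 hn
  obtain ⟨hlow, hup⟩ := hYbounds n hYn.le
  have hpow : Y ^ Module.finrank ℚ K ≤ (n : ℝ) ^ Module.finrank ℚ K := by gcongr
  have hn0 : (0 : ℝ) ≤ n := hY.le.trans hYn.le
  have hnorm : (absNorm (Ideal.span {(n : 𝓞 K) - θ}) : ℝ) =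
      ((minpoly ℤ θ).map (Int.castRingHom ℝ)).eval (n : ℝ) := by
    rw [eval_intCast_map, Int.cast_id, eq_intCast] at hlow ⊢
    rw [absNorm_span_intCast_sub hθ, Nat.cast_natAbs, Int.cast_abs,
      abs_of_nonneg ((div_nonneg (pow_nonneg hn0 _) zero_le_two).trans hlow)]
  refine hnorm ▸ ⟨by linarith, hup.trans ?_⟩
  calc (3 / 2 : ℝ) * n ^ Module.finrank ℚ K
      ≤ (3 / 2) ^ Module.finrank ℚ K * (2 * Y) ^ Module.finrank ℚ K := by
        gcongr
        exact le_self_pow₀ (by norm_num) hd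
    _ = (3 * Y) ^ Module.finrank ℚ K := by
        rw [← mul_pow]
        ring

open Classical in
/-- The exponent `v_P((n - θ))` of `P` in the factorization of the ideal `(n - θ)`, with value `0`
when `n = θ`. -/
noncomputable def subExponent (θ : 𝓞 K) (P : Ideal (𝓞 K)) (n : ℤ) : ℕ :=
  (normalizedFactors (Ideal.span {(n : 𝓞 K) - θ})).count P

lemma L1_eq_sum (θ : 𝓞 K) (n : ℤ) (Y : ℝ) :
    L1 θ n Y = ∑ P ∈ primesNormLE K (3 * Y), (subExponent θ P n : ℝ) * Real.log (absNorm P) := by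
  classical
  simp only [L1, ← absNorm_eq_card_quotient]
  rw [finsum_eq_sum_of_support_subset (s := primesNormLE K (3 * Y))]
  · refine Finset.sum_congr rfl fun P hP => ?_
    obtain ⟨hprime, -, hle⟩ := mem_primesNormLE.1 hP
    exact if_pos ⟨hprime, hle⟩
  · intro P hP
    obtain ⟨⟨hprime, hle⟩, hne⟩ := ite_ne_right_iff.1 (Function.mem_support.1 hP)
    refine mem_primesNormLE.2 ⟨hprime, ?_, hle⟩
    rintro rfl
    simp at hne

lemma L1_nonneg (θ : 𝓞 K) (n : ℤ) (Y : ℝ) : 0 ≤ L1 θ n Y := by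
  rw [L1_eq_sum]
  exact Finset.sum_nonneg fun P _ => mul_nonneg (Nat.cast_nonneg _) (Real.log_natCast_nonneg _)

lemma pow_dvd_span_sub_of_le_subExponent {P : Ideal (𝓞 K)} {n : ℤ} {k : ℕ}
    (hk : k ≤ subExponent θ P n) : P ^ k ∣ Ideal.span {(n : 𝓞 K) - θ} := by
  classical
  rcases eq_or_ne (Ideal.span {(n : 𝓞 K) - θ}) ⊥ with hbot | hne_bot
  · exact hbot ▸ dvd_zero _
  · rw [← Multiset.prod_replicate, ← Ideal.prod_normalizedFactors_eq_self hne_bot]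
    exact Multiset.prod_dvd_prod_of_le (Multiset.le_count_iff_replicate_le.1 hk)

lemma sub_mem_pow_of_le_subExponent {P : Ideal (𝓞 K)} {n : ℤ} {k : ℕ}
    (hk : k ≤ subExponent θ P n) : (n : 𝓞 K) - θ ∈ P ^ k :=
  Ideal.dvd_span_singleton.1 (pow_dvd_span_sub_of_le_subExponent hk)

lemma subExponent_mul_log_le {n : ℤ} (hn : Ideal.span {(n : 𝓞 K) - θ} ≠ ⊥) (P : Ideal (𝓞 K)) :
    (subExponent θ P n : ℝ) * Real.log (absNorm P) ≤
      Real.log (absNorm (Ideal.span {(n : 𝓞 K) - θ})) := by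
  have hlog := log_absNorm_le_of_dvd hn (pow_dvd_span_sub_of_le_subExponent (P := P) le_rfl)
  rwa [map_pow, Nat.cast_pow, Real.log_pow] at hlog

lemma log_absNorm_eq_sum_normalizedFactors {I : Ideal (𝓞 K)} (hI : I ≠ ⊥) :
    Real.log (absNorm I) =
      ((normalizedFactors I).map fun P => Real.log (absNorm P)).sum := by
  have hne : ∀ x ∈ (normalizedFactors I).map (fun P => (absNorm P : ℝ)), x ≠ 0 := by
    simp only [Multiset.mem_map]
    rintro _ ⟨P, hP, rfl⟩
    exact Nat.cast_ne_zero.2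
      (Ideal.absNorm_eq_zero_iff.not.2 (prime_of_normalized_factor P hP).ne_zero)
  conv_lhs => rw [← Ideal.prod_normalizedFactors_eq_self hI]
  rw [map_multiset_prod, Nat.cast_multiset_prod, Multiset.map_map]
  simpa [Multiset.map_map] using Real.log_multiset_prod hne

lemma L1_eq_sum_filter_normalizedFactors (θ : 𝓞 K) (n : ℤ) (Y : ℝ) :
    L1 θ n Y = (((normalizedFactors (Ideal.span {(n : 𝓞 K) - θ})).filter
      fun P => (absNorm P : ℝ) ≤ 3 * Y).map fun P => Real.log (absNorm P)).sum := by
  classical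
  set F := normalizedFactors (Ideal.span {(n : 𝓞 K) - θ})
  rw [L1_eq_sum, Finset.sum_multiset_map_count]
  symm
  have hsub : (F.filter fun P => (absNorm P : ℝ) ≤ 3 * Y).toFinset ⊆ primesNormLE K (3 * Y) := by
    intro P hP
    obtain ⟨hPF, hle⟩ := Multiset.mem_filter.1 (Multiset.mem_toFinset.1 hP)
    have hprime := prime_of_normalized_factor P hPF
    exact mem_primesNormLE.2 ⟨Ideal.isPrime_of_prime hprime, hprime.ne_zero, hle⟩
  refine (Finset.sum_subset hsub fun P _ hP => ?_).trans (Finset.sum_congr rfl fun P hP => ?_)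
  · rw [Multiset.count_eq_zero.2 (Multiset.mem_toFinset.not.1 hP), zero_smul]
  · have hle := (mem_primesNormLE.1 hP).2.2
    rw [Multiset.count_filter, if_pos hle, nsmul_eq_mul]
    rfl

lemma eventually_log_absNorm_span_le (hθ : Algebra.adjoin ℚ {(θ : K)} = ⊤) :
    ∀ᶠ Y : ℝ in atTop, ∀ n ∈ dyadicInts Y, Ideal.span {(n : 𝓞 K) - θ} ≠ ⊥ ∧
      Real.log (absNorm (Ideal.span {(n : 𝓞 K) - θ})) ≤
        2 * Module.finrank ℚ K * Real.log Y := by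
  filter_upwards [eventually_absNorm_span_intCast_sub_bounds hθ, eventually_ge_atTop 3]
    with Y hbounds hY n hn
  obtain ⟨hlow, hup⟩ := hbounds n hn
  have hpos : (0 : ℝ) < absNorm (Ideal.span {(n : 𝓞 K) - θ}) := hlow.trans_lt' (by positivity)
  refine ⟨fun hbot => by simp [hbot] at hpos, ?_⟩
  calc Real.log (absNorm (Ideal.span {(n : 𝓞 K) - θ}))
      ≤ Real.log ((Y * Y) ^ Module.finrank ℚ K) := by
        refine Real.log_le_log hpos (hup.trans ?_)
        gcongr
    _ = 2 * Module.finrank ℚ K * Real.log Y := by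
        rw [Real.log_pow, Real.log_mul (by positivity) (by positivity)]
        ring

end Exponents

section Average

variable {K : Type*} [Field K] [NumberField K] {θ : 𝓞 K}

lemma absNorm_pow_le_abs_sub (hθ : Algebra.adjoin ℚ {(θ : K)} = ⊤) {P : Ideal (𝓞 K)}
    (hP : P.IsMaximal) (hD : minpolyDeriv θ ∉ P) {k : ℕ} {n m : ℤ} (hnm : n ≠ m)
    (hn : (n : 𝓞 K) - θ ∈ P ^ k) (hm : (m : 𝓞 K) - θ ∈ P ^ k) :
    (absNorm P : ℝ) ^ k ≤ |(n : ℝ) - m| := by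
  exact_mod_cast Int.le_of_dvd (abs_pos.2 (sub_ne_zero.2 hnm))
    ((dvd_abs _ _).2 (absNorm_pow_dvd_sub hθ hP hD hn hm))

/- The base is the `d`-th root of the norm of `P`, for `d` the degree of `K`. -/
lemma exists_one_lt_pow_le_abs_sub (θ : 𝓞 K) {P : Ideal (𝓞 K)} (hP : P.IsPrime) (hP0 : P ≠ ⊥) :
    ∃ N : ℝ, 1 < N ∧ ∀ (k : ℕ) (n m : ℤ), n ≠ m → (n : 𝓞 K) - θ ∈ P ^ k →
      (m : 𝓞 K) - θ ∈ P ^ k → N ^ k ≤ |(n : ℝ) - m| := by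
  have hd : Module.finrank ℚ K ≠ 0 := Module.finrank_pos.ne'
  have hnorm : (1 : ℝ) < absNorm P := by exact_mod_cast two_le_absNorm hP hP0
  refine ⟨(absNorm P : ℝ) ^ (Module.finrank ℚ K : ℝ)⁻¹,
    Real.one_lt_rpow hnorm (by positivity), fun k n m hnm hn hm => ?_⟩
  have hle : (absNorm P : ℝ) ^ k ≤ |(n : ℝ) - m| ^ Module.finrank ℚ K := by
    rw [← abs_pow]
    exact_mod_cast Int.le_of_dvd (abs_pos.2 (pow_ne_zero _ (sub_ne_zero.2 hnm)))
      ((dvd_abs _ _).2 (absNorm_pow_dvd_sub_pow_finrank hn hm))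
  refine le_of_pow_le_pow_left₀ hd (abs_nonneg _) ?_
  rwa [← pow_mul, mul_comm, pow_mul, Real.rpow_inv_natCast_pow (by positivity) hd]

lemma sum_subExponent_mul_log_le_of_spaced {P : Ideal (𝓞 K)} (hP : P.IsPrime) (hP0 : P ≠ ⊥)
    {N Y B : ℝ} (hN : 1 < N) (hY : 0 ≤ Y) (hB0 : 0 ≤ B)
    (hB : ∀ n ∈ dyadicInts Y, (subExponent θ P n : ℝ) * Real.log (absNorm P) ≤ B)
    (hspaced : ∀ (k : ℕ) (n m : ℤ), n ≠ m → (n : 𝓞 K) - θ ∈ P ^ k →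
      (m : 𝓞 K) - θ ∈ P ^ k → N ^ k ≤ |(n : ℝ) - m|) :
    ∑ n ∈ dyadicInts Y, (subExponent θ P n : ℝ) * Real.log (absNorm P) ≤
      Y / (N - 1) * Real.log (absNorm P) + B := by
  have hlog : 0 < Real.log (absNorm P) :=
    Real.log_pos (by exact_mod_cast two_le_absNorm hP hP0)
  have hcard : ∀ k, (((dyadicInts Y).filter (k ≤ subExponent θ P ·)).card : ℝ) ≤
      Y / N ^ k + 1 := fun k => by
    have hcount := card_le_div_add_one_of_spaced (a := Y) (b := 2 * Y) (pow_pos (by linarith) k)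
      (by linarith) (T := (dyadicInts Y).filter (k ≤ subExponent θ P ·))
      (fun n hn => (mem_dyadicInts.1 (Finset.mem_filter.1 hn).1).imp le_of_lt le_of_lt)
      fun n hn m hm hnm => hspaced k n m hnm
        (sub_mem_pow_of_le_subExponent (Finset.mem_filter.1 hn).2)
        (sub_mem_pow_of_le_subExponent (Finset.mem_filter.1 hm).2)
    rwa [two_mul, add_sub_cancel_right] at hcount
  have hM : ∀ n ∈ dyadicInts Y, subExponent θ P n ≤ ⌊B / Real.log (absNorm P)⌋₊ := fun n hn =>
    Nat.le_floor ((le_div_iff₀ hlog).2 (hB n hn))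
  calc ∑ n ∈ dyadicInts Y, (subExponent θ P n : ℝ) * Real.log (absNorm P)
      ≤ (Y / (N - 1) + ⌊B / Real.log (absNorm P)⌋₊) * Real.log (absNorm P) := by
        rw [← Finset.sum_mul]
        gcongr
        exact sum_le_div_sub_one_add _ hN hY hM hcard
    _ ≤ Y / (N - 1) * Real.log (absNorm P) + B := by
        rw [add_mul]
        gcongr
        exact (le_div_iff₀ hlog).1 (Nat.floor_le (by positivity))

lemma isLittleO_id_mul_log : (fun Y : ℝ => Y) =o[atTop] fun Y => Y * Real.log Y := by
  simpa using (Asymptotics.isBigO_refl (fun Y : ℝ => Y) atTop).mul_isLittleO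
    (Asymptotics.isLittleO_const_left.2 (.inr (tendsto_norm_atTop_atTop.comp
      Real.tendsto_log_atTop)) : (fun _ : ℝ => (1 : ℝ)) =o[atTop] Real.log)

lemma isLittleO_sum_subExponent_mul_log (hθ : Algebra.adjoin ℚ {(θ : K)} = ⊤) {P : Ideal (𝓞 K)}
    (hP : P.IsPrime) (hP0 : P ≠ ⊥) :
    (fun Y : ℝ => ∑ n ∈ dyadicInts Y, (subExponent θ P n : ℝ) * Real.log (absNorm P))
      =o[atTop] fun Y => Y * Real.log Y := by
  obtain ⟨N, hN, hspaced⟩ := exists_one_lt_pow_le_abs_sub θ hP hP0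
  refine Asymptotics.IsBigO.trans_isLittleO (.of_bound
    (Real.log (absNorm P) / (N - 1) + 2 * Module.finrank ℚ K) ?_) isLittleO_id_mul_log
  filter_upwards [eventually_log_absNorm_span_le hθ, eventually_ge_atTop 1] with Y hbound hY
  have hlogY : Real.log Y ≤ Y := Real.log_le_self (by linarith)
  have hsum := sum_subExponent_mul_log_le_of_spaced hP hP0 hN (by linarith)
    (by have := Real.log_nonneg hY; positivity)
    (fun n hn => (subExponent_mul_log_le (hbound n hn).1 P).trans (hbound n hn).2) hspaced
  rw [Real.norm_of_nonneg (Finset.sum_nonneg fun n _ =>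
    mul_nonneg (Nat.cast_nonneg _) (Real.log_natCast_nonneg _)), Real.norm_of_nonneg (by linarith)]
  calc _ ≤ Y / (N - 1) * Real.log (absNorm P) + 2 * Module.finrank ℚ K * Real.log Y := hsum
    _ ≤ Y / (N - 1) * Real.log (absNorm P) + 2 * Module.finrank ℚ K * Y := by gcongr
    _ = (Real.log (absNorm P) / (N - 1) + 2 * Module.finrank ℚ K) * Y := by ring

lemma sum_subExponent_mul_log_le (hθ : Algebra.adjoin ℚ {(θ : K)} = ⊤) {P : Ideal (𝓞 K)}
    (hP : P.IsPrime) (hP0 : P ≠ ⊥) (hD : minpolyDeriv θ ∉ P) {Y B : ℝ} (hY : 0 ≤ Y) (hB0 : 0 ≤ B)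
    (hB : ∀ n ∈ dyadicInts Y, (subExponent θ P n : ℝ) * Real.log (absNorm P) ≤ B) :
    ∑ n ∈ dyadicInts Y, (subExponent θ P n : ℝ) * Real.log (absNorm P) ≤
      Y / (absNorm P - 1) * Real.log (absNorm P) + if (absNorm P).Prime then B else 0 := by
  refine sum_subExponent_mul_log_le_of_spaced hP hP0 (by exact_mod_cast two_le_absNorm hP hP0) hY
    (by split_ifs <;> simp [hB0]) (fun n hn => ?_)
    fun k n m => absNorm_pow_le_abs_sub hθ (hP.isMaximal hP0) hD
  rcases Nat.eq_zero_or_pos (subExponent θ P n) with hzero | hpos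
  · rw [hzero, Nat.cast_zero, zero_mul]
    split_ifs <;> simp [hB0]
  · have hmem := sub_mem_pow_of_le_subExponent (k := 1) hpos
    rw [pow_one] at hmem
    rw [if_pos (prime_absNorm_of_sub_mem hθ hP hP0 hD hmem)]
    exact hB n hn

lemma one_div_sub_one_le {η N : ℝ} (hη : 0 < η) (hN : 1 + 1 / η ≤ N) :
    1 / (N - 1) ≤ (1 + η) / N := by
  have hinv : 0 < 1 / η := by positivity
  have hmul : η * (1 + 1 / η) ≤ η * N := by gcongr
  have hcancel : η * (1 / η) = 1 := by field_simp
  rw [div_le_div_iff₀ (by linarith) (by linarith)]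
  linarith

lemma sum_subExponent_mul_log_le_one_add_mul (hθ : Algebra.adjoin ℚ {(θ : K)} = ⊤)
    {P : Ideal (𝓞 K)} (hP : P.IsPrime) (hP0 : P ≠ ⊥) (hD : minpolyDeriv θ ∉ P) {η : ℝ}
    (hη : 0 < η) (hηP : 1 + 1 / η ≤ absNorm P) {Y B : ℝ} (hY : 0 ≤ Y) (hB0 : 0 ≤ B)
    (hB : ∀ n ∈ dyadicInts Y, (subExponent θ P n : ℝ) * Real.log (absNorm P) ≤ B) :
    ∑ n ∈ dyadicInts Y, (subExponent θ P n : ℝ) * Real.log (absNorm P) ≤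
      (1 + η) * Y * (Real.log (absNorm P) / absNorm P) +
        if (absNorm P).Prime then B else 0 := by
  refine (sum_subExponent_mul_log_le hθ hP hP0 hD hY hB0 hB).trans (add_le_add_left ?_ _)
  calc Y / (absNorm P - 1) * Real.log (absNorm P)
      = Y * Real.log (absNorm P) * (1 / (absNorm P - 1)) := by ring
    _ ≤ Y * Real.log (absNorm P) * ((1 + η) / absNorm P) :=
        mul_le_mul_of_nonneg_left (one_div_sub_one_le hη hηP)
          (mul_nonneg hY (Real.log_natCast_nonneg _))
    _ = (1 + η) * Y * (Real.log (absNorm P) / absNorm P) := by ring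

variable (K) in
lemma isLittleO_card_filter_prime_mul_log :
    (fun Y : ℝ => (((primesNormLE K (3 * Y)).filter fun P => (absNorm P).Prime).card : ℝ) *
      Real.log Y) =o[atTop] fun Y => Y * Real.log Y := by
  have h3 : Tendsto (fun Y : ℝ => 3 * Y) atTop atTop :=
    tendsto_id.const_mul_atTop (by norm_num)
  refine Asymptotics.IsBigO.trans_isLittleO (.of_bound
    (Module.finrank ℚ K * ((Real.log 4 + 1) * 3)) ?_) isLittleO_id_mul_log
  filter_upwards [h3.eventually (Chebyshev.eventually_primeCounting_le (ε := 1) one_pos),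
    eventually_gt_atTop 1] with Y hpi hY
  have hlog : 0 < Real.log Y := Real.log_pos hY
  have hlog3 : Real.log Y ≤ Real.log (3 * Y) := Real.log_le_log (by linarith) (by linarith)
  have hlog3_pos : 0 < Real.log (3 * Y) := hlog.trans_le hlog3
  rw [Real.norm_of_nonneg (by positivity), Real.norm_of_nonneg (by linarith)]
  calc _ ≤ (Module.finrank ℚ K * (Nat.primeCounting ⌊3 * Y⌋₊ : ℝ)) * Real.log Y := by
        gcongr
        exact_mod_cast card_primesNormLE_filter_prime_le K (3 * Y)
    _ ≤ Module.finrank ℚ K * ((Real.log 4 + 1) * (3 * Y) / Real.log (3 * Y)) *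
          Real.log (3 * Y) := by gcongr
    _ = Module.finrank ℚ K * ((Real.log 4 + 1) * 3) * Y := by
        field_simp

lemma isLittleO_sum_primesNormLE_subExponent_mul_log (hθ : Algebra.adjoin ℚ {(θ : K)} = ⊤)
    (T : ℝ) :
    (fun Y : ℝ => ∑ P ∈ primesNormLE K T, ∑ n ∈ dyadicInts Y,
      (subExponent θ P n : ℝ) * Real.log (absNorm P)) =o[atTop] fun Y => Y * Real.log Y :=
  .fun_sum fun _ hP =>
    isLittleO_sum_subExponent_mul_log hθ (mem_primesNormLE.1 hP).1 (mem_primesNormLE.1 hP).2.1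

open Classical in
lemma eventually_sum_sdiff_subExponent_mul_log_le (hθ : Algebra.adjoin ℚ {(θ : K)} = ⊤) {η T : ℝ}
    (hη : 0 < η) (hηT : 1 + 1 / η ≤ T)
    (hDT : (absNorm (Ideal.span {minpolyDeriv θ}) : ℝ) ≤ T) :
    ∀ᶠ Y : ℝ in atTop, ∑ P ∈ primesNormLE K (3 * Y) \ primesNormLE K T, ∑ n ∈ dyadicInts Y,
        (subExponent θ P n : ℝ) * Real.log (absNorm P) ≤
      (1 + η) * Y * ∑ P ∈ primesNormLE K (3 * Y), Real.log (absNorm P) / absNorm P +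
        2 * Module.finrank ℚ K *
          (((primesNormLE K (3 * Y)).filter fun P => (absNorm P).Prime).card * Real.log Y) := by
  filter_upwards [eventually_log_absNorm_span_le hθ, eventually_ge_atTop 1] with Y hbound hY
  have hlogY : 0 ≤ Real.log Y := Real.log_nonneg hY
  set B := 2 * Module.finrank ℚ K * Real.log Y
  have hB0 : 0 ≤ B := by positivity
  have hterm_nonneg : ∀ P : Ideal (𝓞 K), 0 ≤ (1 + η) * Y * (Real.log (absNorm P) / absNorm P) +
      if (absNorm P).Prime then B else 0 := fun P => by
    have := Real.log_natCast_nonneg (absNorm P)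
    split_ifs <;> positivity
  have hterm : ∀ P ∈ primesNormLE K (3 * Y) \ primesNormLE K T,
      ∑ n ∈ dyadicInts Y, (subExponent θ P n : ℝ) * Real.log (absNorm P) ≤
        (1 + η) * Y * (Real.log (absNorm P) / absNorm P) +
          if (absNorm P).Prime then B else 0 := by
    intro P hP
    obtain ⟨hP3Y, hPT⟩ := Finset.mem_sdiff.1 hP
    obtain ⟨hprime, hne_bot, -⟩ := mem_primesNormLE.1 hP3Y
    have hTP : T < absNorm P := not_le.1 fun hle => hPT (mem_primesNormLE.2 ⟨hprime, hne_bot, hle⟩)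
    have hD : minpolyDeriv θ ∉ P :=
      minpolyDeriv_notMem_of_absNorm_lt (by exact_mod_cast hDT.trans_lt hTP)
    exact sum_subExponent_mul_log_le_one_add_mul hθ hprime hne_bot hD hη (hηT.trans hTP.le)
      (by linarith) hB0 fun n hn =>
        (subExponent_mul_log_le (hbound n hn).1 P).trans (hbound n hn).2
  calc _ ≤ ∑ P ∈ primesNormLE K (3 * Y), ((1 + η) * Y * (Real.log (absNorm P) / absNorm P) +
        if (absNorm P).Prime then B else 0) :=
        (Finset.sum_le_sum hterm).trans (Finset.sum_le_sum_of_subset_of_nonneg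
          Finset.sdiff_subset fun P _ _ => hterm_nonneg P)
    _ = _ := by
        rw [Finset.sum_add_distrib, ← Finset.mul_sum, ← Finset.sum_filter, Finset.sum_const,
          nsmul_eq_mul]
        ring

lemma eventually_sum_L1_le (hθ : Algebra.adjoin ℚ {(θ : K)} = ⊤) {ε : ℝ} (hε : 0 < ε) :
    ∀ᶠ Y : ℝ in atTop, ∑ n ∈ dyadicInts Y, L1 θ n Y ≤ (1 + ε) * (Y * Real.log Y) := by
  classical
  obtain ⟨η, hη, hηε⟩ := exists_pos_one_add_pow_three_le (ε := ε / 3) (by positivity)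
  set T := max (absNorm (Ideal.span {minpolyDeriv θ}) : ℝ) (1 + 1 / η)
  have h3 : Tendsto (fun Y : ℝ => 3 * Y) atTop atTop := tendsto_id.const_mul_atTop three_pos
  filter_upwards [
    (isLittleO_sum_primesNormLE_subExponent_mul_log hθ T).bound (c := ε / 3) (by positivity),
    eventually_sum_sdiff_subExponent_mul_log_le hθ hη (le_max_right _ _) (le_max_left _ _),
    ((isLittleO_card_filter_prime_mul_log K).const_mul_left
      (2 * Module.finrank ℚ K : ℝ)).bound (c := ε / 3) (by positivity),
    h3.eventually (eventually_sum_log_div_absNorm_le K hη),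
    eventually_log_mul_const_le three_ne_zero hη, eventually_ge_atTop 1, h3.eventually_ge_atTop T]
    with Y hsmall hlarge hprimes hmertens hlog3 hY hTY
  have hYlog : 0 ≤ Y * Real.log Y := mul_nonneg (by linarith) (Real.log_nonneg hY)
  rw [Real.norm_of_nonneg hYlog] at hsmall hprimes
  have hmain : (1 + η) * Y * ∑ P ∈ primesNormLE K (3 * Y), Real.log (absNorm P) / absNorm P ≤
      (1 + ε / 3) * (Y * Real.log Y) := by
    rw [mul_comm Y] at hlog3
    calc _ ≤ (1 + η) * Y * ((1 + η) * ((1 + η) * Real.log Y)) := by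
          gcongr
          exact hmertens.trans (by gcongr)
      _ = (1 + η) ^ 3 * (Y * Real.log Y) := by ring
      _ ≤ (1 + ε / 3) * (Y * Real.log Y) := by gcongr
  simp only [L1_eq_sum]
  rw [Finset.sum_comm, ← Finset.sum_sdiff (primesNormLE_mono hTY)]
  linarith [(Real.le_norm_self _).trans hsmall, (Real.le_norm_self _).trans hprimes]

end Average

section LargePrimeFactors

variable {K : Type*} [Field K] [NumberField K] {θ : 𝓞 K}

/-- The multiset of prime factors of the ideal `(n - θ)` of norm greater than `3Y`, that is, those
which do not contribute to `L1 θ n Y`. -/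
noncomputable def largeFactors (θ : 𝓞 K) (n : ℤ) (Y : ℝ) : Multiset (Ideal (𝓞 K)) :=
  (normalizedFactors (Ideal.span {(n : 𝓞 K) - θ})).filter fun P => ¬ (absNorm P : ℝ) ≤ 3 * Y

lemma L1_add_sum_largeFactors {n : ℤ} (hn : Ideal.span {(n : 𝓞 K) - θ} ≠ ⊥) (Y : ℝ) :
    L1 θ n Y + ((largeFactors θ n Y).map fun P => Real.log (absNorm P)).sum =
      Real.log (absNorm (Ideal.span {(n : 𝓞 K) - θ})) := by
  rw [L1_eq_sum_filter_normalizedFactors, largeFactors, ← Multiset.sum_add, ← Multiset.map_add,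
    Multiset.filter_add_not, log_absNorm_eq_sum_normalizedFactors hn]

lemma card_largeFactors_lt {n : ℤ} (hn : Ideal.span {(n : 𝓞 K) - θ} ≠ ⊥) {Y : ℝ}
    (hY : 1 < 3 * Y) {d : ℕ} (hd : d ≠ 0)
    (hup : (absNorm (Ideal.span {(n : 𝓞 K) - θ}) : ℝ) ≤ (3 * Y) ^ d) :
    (largeFactors θ n Y).card < d := by
  by_contra! hcard
  have hne : largeFactors θ n Y ≠ 0 := fun h => by simp [h, hd] at hcard
  have hnorm : (0 : ℝ) < absNorm (Ideal.span {(n : 𝓞 K) - θ}) := by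
    exact_mod_cast Nat.pos_of_ne_zero (Ideal.absNorm_eq_zero_iff.not.2 hn)
  have hlog : 0 < Real.log (3 * Y) := Real.log_pos hY
  have hlarge : (largeFactors θ n Y).card * Real.log (3 * Y) <
      ((largeFactors θ n Y).map fun P => Real.log (absNorm P)).sum := by
    have hlt := Multiset.sum_lt_sum_of_nonempty (f := fun _ => Real.log (3 * Y))
      (g := fun P : Ideal (𝓞 K) => Real.log (absNorm P)) hne fun P hP =>
        Real.log_lt_log (by linarith) (not_le.1 (Multiset.mem_filter.1 hP).2)
    simpa using hlt
  have htotal : ((largeFactors θ n Y).map fun P => Real.log (absNorm P)).sum ≤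
      d * Real.log (3 * Y) := by
    rw [← Real.log_pow]
    linarith [Real.log_le_log hnorm hup, L1_add_sum_largeFactors hn Y, L1_nonneg θ n Y]
  have hcard' : (d : ℝ) * Real.log (3 * Y) ≤ (largeFactors θ n Y).card * Real.log (3 * Y) := by
    gcongr
  linarith

lemma exists_mem_largeFactors_rpow_le {n : ℤ} {Y η ε : ℝ} {d : ℕ} (hd : 1 < d) (hY : 2 < Y)
    (hη : 0 < η) (hε : Real.log 2 < (d - 1) * ε * Real.log Y)
    (hlow : Y ^ d / 2 ≤ absNorm (Ideal.span {(n : 𝓞 K) - θ}))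
    (hup : (absNorm (Ideal.span {(n : 𝓞 K) - θ}) : ℝ) ≤ (3 * Y) ^ d)
    (hL : L1 θ n Y ≤ (1 - η) * Real.log Y) :
    ∃ P ∈ largeFactors θ n Y, Y ^ (1 + η / (d - 1) - ε) ≤ absNorm P := by
  have hn : Ideal.span {(n : 𝓞 K) - θ} ≠ ⊥ := fun hbot => by
    rw [hbot, Ideal.absNorm_bot, Nat.cast_zero] at hlow
    exact hlow.not_gt (by positivity)
  have hd' : (2 : ℝ) ≤ d := by exact_mod_cast hd
  have hlog2 : Real.log 2 < Real.log Y := Real.log_lt_log two_pos hY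
  have hlog : 0 < Real.log Y := Real.log_pos (by linarith)
  have hcard : ((largeFactors θ n Y).card : ℝ) ≤ d - 1 := by
    have hlt : ((largeFactors θ n Y).card : ℝ) + 1 ≤ d := by
      exact_mod_cast card_largeFactors_lt hn (by linarith) (by lia) hup
    linarith
  have hsum : (d - 1 + η) * Real.log Y - Real.log 2 ≤
      ((largeFactors θ n Y).map fun P => Real.log (absNorm P)).sum := by
    have hlogN := Real.log_le_log (by positivity) hlow
    rw [Real.log_div (by positivity) two_ne_zero, Real.log_pow] at hlogN
    linarith [L1_add_sum_largeFactors hn Y]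
  have hpos : 0 < (d - 1 + η) * Real.log Y - Real.log 2 := by nlinarith
  have hmul : (d - 1) * ((1 + η / (d - 1) - ε) * Real.log Y) =
      (d - 1 + η) * Real.log Y - (d - 1) * ε * Real.log Y := by
    have : (d : ℝ) - 1 ≠ 0 := by linarith
    field_simp
  obtain ⟨_, hmem, hle⟩ := exists_le_mem_of_mul_lt_sum
    (k := d - 1) (m := (1 + η / (d - 1) - ε) * Real.log Y) (by rwa [Multiset.card_map])
    (hpos.trans_le hsum) (by linarith)
  obtain ⟨P, hP, rfl⟩ := Multiset.mem_map.1 hmem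
  have hP_pos : (0 : ℝ) < absNorm P := by
    linarith [not_le.1 (Multiset.mem_filter.1 hP).2]
  refine ⟨P, hP, (Real.log_le_log_iff (by positivity) hP_pos).1 ?_⟩
  rwa [Real.log_rpow (by linarith)]

lemma prime_absNorm_and_dvd_eval_of_mem_largeFactors (hθ : Algebra.adjoin ℚ {(θ : K)} = ⊤)
    {n : ℤ} {Y : ℝ} (hD : (absNorm (Ideal.span {minpolyDeriv θ}) : ℝ) ≤ 3 * Y)
    {P : Ideal (𝓞 K)} (hP : P ∈ largeFactors θ n Y) :
    (absNorm P).Prime ∧ (absNorm P : ℤ) ∣ (minpoly ℤ θ).eval n := by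
  obtain ⟨hfactor, hlarge⟩ := Multiset.mem_filter.1 hP
  have hprime := prime_of_normalized_factor P hfactor
  have hmem : (n : 𝓞 K) - θ ∈ P :=
    Ideal.dvd_span_singleton.1 (dvd_of_mem_normalizedFactors hfactor)
  refine ⟨prime_absNorm_of_sub_mem hθ (Ideal.isPrime_of_prime hprime) hprime.ne_zero
    (minpolyDeriv_notMem_of_absNorm_lt ?_) hmem, ?_⟩
  · exact_mod_cast hD.trans_lt (not_le.1 hlarge)
  · rw [← norm_intCast_sub_eq_eval_minpoly hθ]
    exact Ideal.absNorm_dvd_norm_of_mem hmem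

lemma eventually_exists_prime_dvd_eval_of_L1_le (hθ : Algebra.adjoin ℚ {(θ : K)} = ⊤)
    (hd : 1 < Module.finrank ℚ K) {η ε : ℝ} (hη : 0 < η) (hε : 0 < ε) :
    ∀ᶠ Y : ℝ in atTop, ∀ n ∈ dyadicInts Y, L1 θ n Y ≤ (1 - η) * Real.log Y →
      ∃ p : ℕ, p.Prime ∧ (p : ℤ) ∣ (minpoly ℤ θ).eval n ∧
        Y ^ (1 + η / (Module.finrank ℚ K - 1) - ε) ≤ p := by
  have hd' : (0 : ℝ) < Module.finrank ℚ K - 1 := sub_pos.2 (by exact_mod_cast hd)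
  have h3 : Tendsto (fun Y : ℝ => 3 * Y) atTop atTop := tendsto_id.const_mul_atTop three_pos
  filter_upwards [eventually_absNorm_span_intCast_sub_bounds hθ, eventually_gt_atTop 2,
    h3.eventually_ge_atTop (absNorm (Ideal.span {minpolyDeriv θ}) : ℝ),
    (Real.tendsto_log_atTop.const_mul_atTop (mul_pos hd' hε)).eventually_gt_atTop (Real.log 2)]
    with Y hbounds hY hD hlog n hn hL
  obtain ⟨hlow, hup⟩ := hbounds n hn
  obtain ⟨P, hP, hle⟩ := exists_mem_largeFactors_rpow_le hd hY hη hlog hlow hup hL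
  obtain ⟨hprime, hdvd⟩ := prime_absNorm_and_dvd_eval_of_mem_largeFactors hθ hD hP
  exact ⟨absNorm P, hprime, hdvd, hle⟩

lemma eventually_mul_le_card_filter_L1_le (hθ : Algebra.adjoin ℚ {(θ : K)} = ⊤) {α δ ε : ℝ}
    (hα : 0 < α) (hδ : 0 < δ) (hε : 0 < ε)
    (hcard : ∀ β < α, ∀ᶠ Y : ℝ in atTop,
      β * Y ≤ ((dyadicInts Y).filter fun n => (1 + δ) * Real.log Y < L1 θ n Y).card) :
    ∀ᶠ Y : ℝ in atTop, (α ^ 2 * δ - ε) * Y ≤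
      ((dyadicInts Y).filter fun n => L1 θ n Y ≤ (1 - α * δ) * Real.log Y).card := by
  have hαδ : 0 < α * δ := mul_pos hα hδ
  have hβ : α - ε / 4 / (δ + α * δ) < α := sub_lt_self _ (by positivity)
  filter_upwards [eventually_sum_L1_le hθ (ε := ε / 4) (by positivity), hcard _ hβ,
    eventually_gt_atTop 1,
    (tendsto_id.const_mul_atTop (by positivity : 0 < ε / 2)).eventually_ge_atTop (1 + α * δ)]
    with Y hsum hmany hY hYlarge
  have hlog : 0 < Real.log Y := Real.log_pos hY
  have hcount := card_mul_add_card_sub_mul_le_sum (dyadicInts Y) (f := fun n => L1 θ n Y)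
    (l := (1 - α * δ) * Real.log Y) (u := (1 + δ) * Real.log Y) (fun n _ => L1_nonneg θ n Y)
    (by gcongr; linarith)
  set many := (((dyadicInts Y).filter fun n => (1 + δ) * Real.log Y < L1 θ n Y).card : ℝ)
  set few := (((dyadicInts Y).filter fun n => L1 θ n Y ≤ (1 - α * δ) * Real.log Y).card : ℝ)
  set total := ((dyadicInts Y).card : ℝ)
  have hbalance : many * (1 + δ) + (total - many - few) * (1 - α * δ) ≤ (1 + ε / 4) * Y := by
    refine le_of_mul_le_mul_right ?_ hlog
    linarith
  have htotal : Y - 1 ≤ total ∧ total ≤ Y + 1 := by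
    have := abs_le.1 (abs_card_dyadicInts_sub_le (by linarith : 0 < Y))
    constructor <;> linarith
  have htotal_mul : (1 - α * δ) * Y - (1 + α * δ) ≤ (1 - α * δ) * total := by nlinarith
  have hmany_mul : (δ + α * δ) * α * Y - ε / 4 * Y ≤ (δ + α * δ) * many := by
    refine le_trans (le_of_eq ?_) (mul_le_mul_of_nonneg_left hmany (by positivity))
    field_simp
  have hfew : 0 ≤ α * δ * few := by positivity
  simp only [id] at hYlarge
  linarith

end LargePrimeFactors

section Conclusion

lemma eventually_mul_le_card_of_tendsto {A : ℝ → Set ℤ} {B : ℝ → Finset ℤ} {α β : ℝ}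
    (hcard : Tendsto (fun Y : ℝ => (Nat.card (A Y) : ℝ) / Y) atTop (𝓝 α))
    (hAB : ∀ᶠ Y in atTop, ∀ n ∈ A Y, n ∈ B Y) (hβ : β < α) :
    ∀ᶠ Y : ℝ in atTop, β * Y ≤ (B Y).card := by
  filter_upwards [hcard.eventually_const_lt hβ, hAB, eventually_gt_atTop 0] with Y hlt hsub hY
  refine ((lt_div_iff₀ hY).1 hlt).le.trans ?_
  rw [Nat.card_coe_set_eq, ← Set.ncard_coe_finset]
  exact_mod_cast Set.ncard_le_ncard hsub (B Y).finite_toSet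

theorem stmt_6_general {f : ℤ[X]} (hmonic : f.Monic) (hf : Irreducible f)
    (hdeg : 1 < f.natDegree) {K : Type*} [Field K] [NumberField K] {θ : 𝓞 K}
    (hroot : aeval θ f = 0) (hθ : Algebra.adjoin ℚ {(θ : K)} = ⊤)
    {α δ : ℝ} (hα : 0 < α) (hδ : 0 < δ) {A : ℝ → Set ℤ}
    (hsub : ∀ Y : ℝ, A Y ⊆ {n : ℤ | Y < n ∧ (n : ℝ) < 2 * Y})
    (hcard : Tendsto (fun Y : ℝ => (Nat.card (A Y) : ℝ) / Y) atTop (𝓝 α))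
    (hL : ∀ᶠ Y : ℝ in atTop, ∀ n ∈ A Y, (1 + δ) * Real.log Y < L1 θ n Y)
    {ε : ℝ} (hε : 0 < ε) :
    ∀ᶠ Y : ℝ in atTop, (α ^ 2 * δ - ε) * Y ≤ Nat.card {n : ℤ // Y < n ∧ (n : ℝ) < 2 * Y ∧
      ∃ p : ℕ, p.Prime ∧ (p : ℤ) ∣ f.eval n ∧
        Y ^ (1 + α * δ / (f.natDegree - 1) - ε) ≤ (p : ℝ)} := by
  classical
  have hint : IsIntegral ℤ θ := RingOfIntegers.isIntegral θ
  obtain rfl : minpoly ℤ θ = f := eq_of_monic_of_associated (minpoly.monic hint) hmonic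
    ((minpoly.irreducible hint).associated_of_dvd hf (minpoly.isIntegrallyClosed_dvd hint hroot))
  rw [natDegree_minpoly_eq_finrank hθ] at hdeg ⊢
  have hlarge : ∀ᶠ Y : ℝ in atTop, ∀ n ∈ A Y,
      n ∈ (dyadicInts Y).filter fun n => (1 + δ) * Real.log Y < L1 θ n Y := hL.mono
    fun Y hLY n hn => Finset.mem_filter.2 ⟨mem_dyadicInts.2 (hsub Y hn), hLY n hn⟩
  filter_upwards [eventually_mul_le_card_filter_L1_le hθ hα hδ hε fun _ =>
      eventually_mul_le_card_of_tendsto hcard hlarge,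
    eventually_exists_prime_dvd_eval_of_L1_le hθ hdeg (mul_pos hα hδ) hε] with Y hmany hprime
  rw [Nat.subtype_card ((dyadicInts Y).filter fun n : ℤ => ∃ p : ℕ, p.Prime ∧
    (p : ℤ) ∣ (minpoly ℤ θ).eval n ∧ Y ^ (1 + α * δ / (Module.finrank ℚ K - 1) - ε) ≤ (p : ℝ))
    fun n => by rw [Finset.mem_filter, mem_dyadicInts, and_assoc]]
  refine hmany.trans (Nat.cast_le.2 (Finset.card_le_card fun n hn => ?_))
  obtain ⟨hnY, hsmall⟩ := Finset.mem_filter.1 hn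
  exact Finset.mem_filter.2 ⟨hnY, hprime n hnY hsmall⟩

end Conclusion

/-- Let `α, δ > 0` and suppose that for every sufficiently large `X` there is
a set `A₁(X) ⊆ {n : X < n < 2X}` with `#A₁(X)/X → α` and `L₁(n, X) > (1 + δ)·log X` on
`A₁(X)`. Then for every `ε > 0` and all sufficiently large `X`, the number of integers
`n ∈ (X, 2X)` for which `f(n)` has a prime factor `p ≥ X^(1 + αδ/2 − ε)` is at least
`(α²δ − ε)·X`. -/
theorem stmt_6 (c₀ c₁ c₂ : ℤ)
    (hf : Irreducible (X ^ 3 + C c₂ * X ^ 2 + C c₁ * X + C c₀ : ℤ[X]))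
    (K : Type*) [Field K] [NumberField K] (r : K)
    (hr : aeval r (X ^ 3 + C c₂ * X ^ 2 + C c₁ * X + C c₀ : ℤ[X]) = 0)
    (hgen : Algebra.adjoin ℚ {r} = ⊤)
    (rO : 𝓞 K) (hrO : algebraMap (𝓞 K) K rO = r)
    (α δ : ℝ) (hα : 0 < α) (hδ : 0 < δ)
    (A₁ : ℝ → Set ℤ)
    (hsub : ∀ Y : ℝ, A₁ Y ⊆ {n : ℤ | Y < (n : ℝ) ∧ (n : ℝ) < 2 * Y})
    (hcard : Filter.Tendsto (fun Y : ℝ => (Nat.card (A₁ Y) : ℝ) / Y)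
      Filter.atTop (nhds α))
    (hL : ∀ᶠ Y : ℝ in Filter.atTop, ∀ n ∈ A₁ Y, (1 + δ) * Real.log Y < L1 rO n Y) :
    ∀ ε > (0 : ℝ), ∀ᶠ Y : ℝ in Filter.atTop,
      (α ^ 2 * δ - ε) * Y ≤ Nat.card {n : ℤ // Y < (n : ℝ) ∧ (n : ℝ) < 2 * Y ∧
        ∃ p : ℕ, p.Prime ∧ (p : ℤ) ∣ (X ^ 3 + C c₂ * X ^ 2 + C c₁ * X + C c₀ : ℤ[X]).eval n ∧
          Y ^ (1 + α * δ / 2 - ε) ≤ (p : ℝ)} := by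
  subst hrO
  intro ε hε
  have hdeg : (X ^ 3 + C c₂ * X ^ 2 + C c₁ * X + C c₀ : ℤ[X]).natDegree = 3 := by compute_degree!
  have hexp : ((3 : ℕ) : ℝ) - 1 = 2 := by norm_num
  have hlarge := stmt_6_general (by monicity!) hf (by lia)
    ((aeval_algebraMap_eq_zero_iff K rO _).1 hr) hgen hα hδ hsub hcard hL hε
  rwa [hdeg, hexp] at hlarge
end
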